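/- arXiv:0908.3056 — 7 statements merged into one kernel-verified Lean document; each statement's English description precedes it below -/
import Mathlib

section
/- (Twisted Frobenius–Schur theorem.) Let G be a finite group, ξ a linear character of G and χ an irreducible character of G. If χ = χ̄⊗ξ (that is, χ(g) = conj(χ(g))·ξ(g) for all g ∈ G), then ν₂^ξ(χ) = 1 or ν₂^ξ(χ) = −1; if χ ≠ χ̄⊗ξ, then ν₂^ξ(χ) = 0. -/
/-!
Fix a matrix form `R` of the representation. The group acts on bilinear forms, i.e. on square
matrices `X`, by `g • X = ξ(g) R(g⁻¹)ᵀ X R(g⁻¹)`. The average `P` of this action is the projection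
onto the space of invariants, and transposition `τ` commutes with the action.

* The trace of `P` is `d = dim` of the invariants, and equals the scalar product of `χ` with
  `ψ = χ̄ ⊗ ξ`, because `g` acts with trace `ξ(g) χ(g⁻¹)²` (`trace_twistedForm`).
* The trace of `τ ∘ P` is `ν₂^ξ(χ)`, because `τ ∘ g` has trace `ξ(g) χ(g⁻²)`
  (`trace_transpose_comp_twistedForm`).

As `χ` and `ψ` both have norm one, `∑ |χ - ψ|² = |G| (2 - 2d)`, so the natural number `d` is
`0` or `1`, and it is `1` exactly when `χ = ψ`. If `d = 0`, then `P = 0` and `ν₂^ξ(χ) = 0`. If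
`d = 1`, then `τ` acts on the line of invariants by a scalar `c` with `c² = 1`, so `τ ∘ P = c P`
and `ν₂^ξ(χ) = c`.
-/

open scoped BigOperators
open scoped Matrix ComplexOrder

section Helpers

variable {G : Type} [Group G] {n : Type} [Fintype n] [DecidableEq n]

/-- The representation of `G` on bilinear forms (as matrices) attached to a matrix representation
`R` and a linear character `ξ`: `g` sends `X` to `ξ(g) R(g⁻¹)ᵀ X R(g⁻¹)`. -/
noncomputable def twistedForm (R : G →* Matrix n n ℂ) (ξ : G →* ℂˣ) :
    Representation ℂ G (Matrix n n ℂ) where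
  toFun g :=
    { toFun := fun X => (ξ g : ℂ) • ((R g⁻¹)ᵀ * X * R g⁻¹)
      map_add' := fun X Y => by simp [mul_add, add_mul]
      map_smul' := fun c X => by simp [smul_comm c] }
  map_one' := by ext1 X; simp
  map_mul' g h := by
    ext1 X
    simp [Matrix.mul_assoc, Matrix.transpose_mul, mul_smul, smul_comm (ξ g : ℂ)]

lemma twistedForm_apply (R : G →* Matrix n n ℂ) (ξ : G →* ℂˣ) (g : G) (X : Matrix n n ℂ) :
    twistedForm R ξ g X = (ξ g : ℂ) • ((R g⁻¹)ᵀ * X * R g⁻¹) := rfl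

/-- The trace of an endomorphism of a matrix space, computed in the basis of matrix units. -/
lemma trace_end_matrix (f : Matrix n n ℂ →ₗ[ℂ] Matrix n n ℂ) :
    LinearMap.trace ℂ _ f = ∑ i, ∑ j, f (Matrix.single i j 1) i j := by
  rw [LinearMap.trace_eq_matrix_trace ℂ (Matrix.stdBasis ℂ n n), Matrix.trace,
    Fintype.sum_prod_type]
  refine Finset.sum_congr rfl fun i _ => Finset.sum_congr rfl fun j _ => ?_
  rw [Matrix.diag_apply, LinearMap.toMatrix_apply, Matrix.stdBasis_eq_single]
  simp [Matrix.stdBasis]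

lemma trace_twistedForm (R : G →* Matrix n n ℂ) (ξ : G →* ℂˣ) (g : G) :
    LinearMap.trace ℂ _ (twistedForm R ξ g) = (ξ g : ℂ) * (R g⁻¹).trace ^ 2 := by
  rw [trace_end_matrix, pow_two, Matrix.trace, Finset.sum_mul_sum, Finset.mul_sum]
  refine Finset.sum_congr rfl fun i _ => ?_
  rw [Finset.mul_sum]
  refine Finset.sum_congr rfl fun j _ => ?_
  simp [twistedForm_apply, Matrix.mul_apply, Matrix.single_apply, ite_and]

lemma trace_transpose_comp_twistedForm (R : G →* Matrix n n ℂ) (ξ : G →* ℂˣ) (g : G) :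
    LinearMap.trace ℂ _ ((Matrix.transposeLinearEquiv n n ℂ ℂ).toLinearMap ∘ₗ twistedForm R ξ g)
      = (ξ g : ℂ) * (R (g⁻¹ ^ 2)).trace := by
  rw [trace_end_matrix, map_pow, pow_two, Matrix.trace, Finset.mul_sum]
  refine Finset.sum_congr rfl fun i _ => ?_
  rw [Matrix.diag_apply, Matrix.mul_apply, Finset.mul_sum]
  refine Finset.sum_congr rfl fun j _ => ?_
  simp [twistedForm_apply, Matrix.mul_apply, Matrix.single_apply, ite_and, mul_comm]

/-- Averaging the standard Hermitian form makes `R` unitary, so `R(g⁻¹)` is conjugate to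
`R(g)ᴴ`. -/
lemma trace_inv_eq_conj [Fintype G] (R : G →* Matrix n n ℂ) (g : G) :
    (R g⁻¹).trace = (starRingEnd ℂ) (R g).trace := by
  classical
  set M : Matrix n n ℂ := ∑ h, (R h)ᴴ * R h with hM
  have hinv : (R g)ᴴ * M * R g = M := by
    rw [hM, Finset.mul_sum, Finset.sum_mul]
    refine Fintype.sum_equiv (Equiv.mulRight g) _ _ fun h => ?_
    simp [Matrix.mul_assoc]
  have hpos : M.PosDef := by
    rw [hM, ← Finset.add_sum_erase _ _ (Finset.mem_univ (1 : G))]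
    refine Matrix.PosDef.add_posSemidef ?_ ?_
    · simpa using Matrix.PosDef.one
    · exact Matrix.posSemidef_sum _ fun h _ => Matrix.posSemidef_conjTranspose_mul_self _
  have hdet : IsUnit M.det := (Matrix.isUnit_iff_isUnit_det _).1 hpos.isUnit
  have hg : R g * R g⁻¹ = 1 := by rw [← map_mul]; simp
  have h1 : (R g)ᴴ * M = M * R g⁻¹ := by
    rw [← hinv, Matrix.mul_assoc _ (R g), hg, hinv, Matrix.mul_one]
  have h2 : R g⁻¹ = M⁻¹ * ((R g)ᴴ * M) := by
    rw [h1, Matrix.nonsing_inv_mul_cancel_left _ _ hdet]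
  rw [h2, Matrix.trace_mul_comm, Matrix.mul_assoc, Matrix.mul_nonsing_inv _ hdet, Matrix.mul_one,
    Matrix.trace_conjTranspose]
  rfl

lemma conj_linearCharacter [Fintype G] (ξ : G →* ℂˣ) (g : G) :
    (starRingEnd ℂ) (ξ g : ℂ) = ((ξ g⁻¹ : ℂˣ) : ℂ) := by
  have h : ‖(ξ g : ℂ)‖ = 1 := by
    refine Complex.norm_eq_one_of_pow_eq_one (n := Fintype.card G) ?_ Fintype.card_ne_zero
    rw [← Units.val_pow_eq_pow_val, ← map_pow, pow_card_eq_one, map_one, Units.val_one]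
  rw [map_inv, Units.val_inv_eq_inv_val, Complex.inv_eq_conj h]

/-- The twisted indicator as the trace of transposition composed with the projection onto the
invariant forms. -/
lemma trace_transpose_comp_average [Fintype G] (R : G →* Matrix n n ℂ) (ξ : G →* ℂˣ)
    [Invertible (Fintype.card G : ℂ)] :
    LinearMap.trace ℂ _ ((Matrix.transposeLinearEquiv n n ℂ ℂ).toLinearMap ∘ₗ
        (twistedForm R ξ).averageMap)
      = (Fintype.card G : ℂ)⁻¹ * ∑ g : G, (starRingEnd ℂ) (ξ g : ℂ) * (R (g ^ 2)).trace := by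
  have h : (twistedForm R ξ).averageMap
      = (Fintype.card G : ℂ)⁻¹ • ∑ g : G, twistedForm R ξ g := by
    simp [Representation.averageMap, GroupAlgebra.average, map_sum]
  rw [h, LinearMap.comp_smul, map_smul, smul_eq_mul]
  congr 1
  have h' : (Matrix.transposeLinearEquiv n n ℂ ℂ).toLinearMap ∘ₗ (∑ g : G, twistedForm R ξ g)
      = ∑ g : G, (Matrix.transposeLinearEquiv n n ℂ ℂ).toLinearMap ∘ₗ twistedForm R ξ g := by
    ext1 X
    simp [LinearMap.sum_apply]
  rw [h', map_sum]
  refine Fintype.sum_equiv (Equiv.inv G) _ _ fun g => ?_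
  rw [trace_transpose_comp_twistedForm, Equiv.inv_apply, conj_linearCharacter, inv_inv]

lemma transpose_mem_invariants (R : G →* Matrix n n ℂ) (ξ : G →* ℂˣ) {X : Matrix n n ℂ}
    (hX : X ∈ (twistedForm R ξ).invariants) : Xᵀ ∈ (twistedForm R ξ).invariants := by
  intro g
  have := congrArg Matrix.transpose (hX g)
  simpa [twistedForm_apply, Matrix.mul_assoc] using this

/-- On a one-dimensional space of invariant forms, transposition is a sign. -/
lemma trace_transpose_comp_average_eq_one_or [Fintype G] (R : G →* Matrix n n ℂ) (ξ : G →* ℂˣ)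
    [Invertible (Fintype.card G : ℂ)]
    (hd : Module.finrank ℂ (twistedForm R ξ).invariants = 1) :
    LinearMap.trace ℂ _ ((Matrix.transposeLinearEquiv n n ℂ ℂ).toLinearMap ∘ₗ
        (twistedForm R ξ).averageMap) = 1 ∨
    LinearMap.trace ℂ _ ((Matrix.transposeLinearEquiv n n ℂ ℂ).toLinearMap ∘ₗ
        (twistedForm R ξ).averageMap) = -1 := by
  obtain ⟨⟨B, hB⟩, hB0, hspan⟩ := finrank_eq_one_iff'.1 hd
  have hB0' : B ≠ 0 := fun h => hB0 (Subtype.ext h)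
  have hspan' : ∀ X ∈ (twistedForm R ξ).invariants, ∃ c : ℂ, c • B = X := fun X hX => by
    obtain ⟨c, hc⟩ := hspan ⟨X, hX⟩
    exact ⟨c, congrArg Subtype.val hc⟩
  obtain ⟨c, hc⟩ := hspan' _ (transpose_mem_invariants R ξ hB)
  have hcc : c * c = 1 := by
    have h1 : (c * c) • B = (1 : ℂ) • B := by
      rw [mul_smul, hc, ← Matrix.transpose_smul, hc, Matrix.transpose_transpose, one_smul]
    exact smul_left_injective ℂ hB0' h1
  have hcomp : (Matrix.transposeLinearEquiv n n ℂ ℂ).toLinearMap ∘ₗ (twistedForm R ξ).averageMap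
      = c • (twistedForm R ξ).averageMap := by
    ext1 X
    obtain ⟨a, ha⟩ := hspan' _ ((twistedForm R ξ).averageMap_invariant X)
    simp only [LinearMap.comp_apply, LinearMap.smul_apply, ← ha]
    simp [← hc, smul_comm a c]
  rw [hcomp, map_smul, ((twistedForm R ξ).isProj_averageMap).trace, hd]
  simpa using mul_self_eq_one_iff.1 hcc

lemma trace_transpose_comp_average_eq_zero [Fintype G] (R : G →* Matrix n n ℂ) (ξ : G →* ℂˣ)
    [Invertible (Fintype.card G : ℂ)]
    (hd : Module.finrank ℂ (twistedForm R ξ).invariants = 0) :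
    LinearMap.trace ℂ _ ((Matrix.transposeLinearEquiv n n ℂ ℂ).toLinearMap ∘ₗ
        (twistedForm R ξ).averageMap) = 0 := by
  have h0 : (twistedForm R ξ).averageMap = 0 := by
    ext1 X
    have h := (twistedForm R ξ).averageMap_invariant X
    rw [Submodule.finrank_eq_zero.1 hd] at h
    simpa using h
  rw [h0, LinearMap.comp_zero, map_zero]

/-- The scalar product of `χ` and `χ̄ ⊗ ξ` is the dimension of the space of invariant forms. -/
lemma sum_char_mul_eq_finrank [Fintype G] (R : G →* Matrix n n ℂ) (ξ : G →* ℂˣ) :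
    ∑ g : G, (starRingEnd ℂ) (R g).trace * ((starRingEnd ℂ) (R g).trace * (ξ g : ℂ))
      = (Fintype.card G : ℂ) * Module.finrank ℂ (twistedForm R ξ).invariants := by
  have hne : (Nat.card G : ℂ) ≠ 0 := by simp
  have : Invertible (Nat.card G : ℂ) := invertibleOfNonzero hne
  rw [← Representation.card_inv_mul_sum_char_eq_finrank, Fintype.card_eq_nat_card,
    mul_inv_cancel_left₀ hne]
  refine Finset.sum_congr rfl fun g _ => ?_
  rw [Representation.character, trace_twistedForm, trace_inv_eq_conj]
  ring

/-- If `χ` has norm one, then `∑ |χ - χ̄ ⊗ ξ|² = |G| (2 - 2d)` with `d` the dimension of the space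
of invariant forms. -/
lemma sum_normSq_sub [Fintype G] (R : G →* Matrix n n ℂ) (ξ : G →* ℂˣ)
    (hone : ∑ g : G, (R g).trace * (starRingEnd ℂ) (R g).trace = Fintype.card G) :
    ∑ g : G, Complex.normSq ((R g).trace - (starRingEnd ℂ) (R g).trace * (ξ g : ℂ))
      = (Fintype.card G : ℝ) * (2 - 2 * Module.finrank ℂ (twistedForm R ξ).invariants) := by
  have hd := sum_char_mul_eq_finrank R ξ
  have hd' := congrArg (starRingEnd ℂ) hd
  simp only [map_sum, map_mul, Complex.conj_conj, map_natCast] at hd'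
  apply Complex.ofReal_injective
  push_cast
  have hexp : ∀ g : G,
      (Complex.normSq ((R g).trace - (starRingEnd ℂ) (R g).trace * (ξ g : ℂ)) : ℂ)
      = 2 * ((R g).trace * (starRingEnd ℂ) (R g).trace)
        - (starRingEnd ℂ) (R g).trace * ((starRingEnd ℂ) (R g).trace * (ξ g : ℂ))
        - (R g).trace * ((R g).trace * (starRingEnd ℂ) (ξ g : ℂ)) := fun g => by
    have hξ : (ξ g : ℂ) * (starRingEnd ℂ) (ξ g : ℂ) = 1 := by
      rw [conj_linearCharacter, ← Units.val_mul, ← map_mul]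
      simp
    rw [← Complex.mul_conj]
    simp only [map_sub, map_mul, Complex.conj_conj]
    linear_combination ((R g).trace * (starRingEnd ℂ) (R g).trace) * hξ
  simp only [hexp, Finset.sum_sub_distrib, ← Finset.mul_sum, hone]
  rw [hd, hd']
  ring

end Helpers

/-- twisted Frobenius–Schur theorem. Let `G` be a finite group, `ξ` a linear
character of `G` and `χ` the character of an irreducible complex representation `V` of `G`.
If `χ = χ̄ ⊗ ξ` (i.e. `χ g = conj (χ g) * ξ g` for all `g`), then `ν₂^ξ(χ) = 1` or
`ν₂^ξ(χ) = -1`; if `χ ≠ χ̄ ⊗ ξ`, then `ν₂^ξ(χ) = 0`. -/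
theorem twisted_frobenius_schur (G : Type) [Group G] [Fintype G]
    (ξ : G →* ℂˣ) (V : FDRep ℂ G) [CategoryTheory.Simple V] :
    ((∀ g : G, V.character g = (starRingEnd ℂ) (V.character g) * (ξ g : ℂ)) →
      (Fintype.card G : ℂ)⁻¹ * ∑ g : G, (starRingEnd ℂ) (ξ g : ℂ) * V.character (g ^ 2) = 1 ∨
      (Fintype.card G : ℂ)⁻¹ * ∑ g : G, (starRingEnd ℂ) (ξ g : ℂ) * V.character (g ^ 2) = -1) ∧
    ((¬ ∀ g : G, V.character g = (starRingEnd ℂ) (V.character g) * (ξ g : ℂ)) →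
      (Fintype.card G : ℂ)⁻¹ *
        ∑ g : G, (starRingEnd ℂ) (ξ g : ℂ) * V.character (g ^ 2) = 0) := by
  classical
  set R : G →* Matrix (Fin (Module.finrank ℂ V)) (Fin (Module.finrank ℂ V)) ℂ :=
    ((LinearMap.toMatrixAlgEquiv (Module.finBasis ℂ V) : _ →* _)).comp V.ρ with hR
  have hχ : ∀ g, V.character g = (R g).trace := fun g =>
    LinearMap.trace_eq_matrix_trace ℂ (Module.finBasis ℂ V) (V.ρ g)
  have hne : (Nat.card G : ℂ) ≠ 0 := by simp
  have : Invertible (Nat.card G : ℂ) := invertibleOfNonzero hne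
  have : Invertible (Fintype.card G : ℂ) := invertibleOfNonzero (by simp)
  have hone : ∑ g : G, (R g).trace * (starRingEnd ℂ) (R g).trace = Fintype.card G := by
    have h := FDRep.char_orthonormal V V
    rw [if_pos ⟨CategoryTheory.Iso.refl V⟩, inv_mul_eq_iff_eq_mul₀ hne] at h
    simpa only [hχ, trace_inv_eq_conj, mul_one, Fintype.card_eq_nat_card, Nat.cast_one] using h
  have hsum := sum_normSq_sub R ξ hone
  have hpos : (0 : ℝ) < Fintype.card G := by exact_mod_cast Fintype.card_pos
  simp only [hχ]
  rw [← trace_transpose_comp_average]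
  constructor
  · intro h
    apply trace_transpose_comp_average_eq_one_or
    have h0 : ∑ g : G, Complex.normSq ((R g).trace - (starRingEnd ℂ) (R g).trace * (ξ g : ℂ)) = 0 :=
      Finset.sum_eq_zero fun g _ => by rw [← h g, sub_self, map_zero]
    rw [h0] at hsum
    have h2 := (mul_eq_zero.1 hsum.symm).resolve_left hpos.ne'
    have h3 : (Module.finrank ℂ (twistedForm R ξ).invariants : ℝ) = 1 := by linarith
    exact_mod_cast h3
  · intro h
    apply trace_transpose_comp_average_eq_zero
    by_contra hd
    apply h
    have hd1 : (1 : ℝ) ≤ Module.finrank ℂ (twistedForm R ξ).invariants := by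
      exact_mod_cast Nat.one_le_iff_ne_zero.2 hd
    have hnn : ∀ g ∈ (Finset.univ : Finset G),
        0 ≤ Complex.normSq ((R g).trace - (starRingEnd ℂ) (R g).trace * (ξ g : ℂ)) :=
      fun g _ => Complex.normSq_nonneg _
    have h0 := le_antisymm (hsum.trans_le (by nlinarith)) (Finset.sum_nonneg hnn)
    intro g
    have hg := (Finset.sum_eq_zero_iff_of_nonneg hnn).1 h0 g (Finset.mem_univ g)
    exact sub_eq_zero.1 (Complex.normSq_eq_zero.1 hg)
end

section
/- For every linear character ξ of G, every linear character ε of S₂, and every irreducible character ψ of SG₂, the multiplicity ⟨Res_{HG₁} ψ, ξ⊗ε⟩_{HG₁} = (1/|HG₁|)·∑_{h∈HG₁} ψ(h)·conj((ξ⊗ε)(h)) equals 0 or 1. In other words, the induced representation of ξ⊗ε from HG₁ to SG₂ is multiplicity-free, i.e. (SG₂, HG₁, ξ⊗ε) is a Gelfand triple. -/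
/-!
Let `S` be a finite group, `H ≤ S`, `χ` a linear character of `H`, and `V` an irreducible complex
representation of `S`. The multiplicity in question is the dimension of the space `W` of vectors on
which `H` acts through `χ`; let `P` be the averaging projection of `V` onto `W`.

Suppose `x ∈ S` satisfies `S = H · C(x)`, where `C(x)` is the centralizer. Then every conjugate
of `x` is already an `H`-conjugate, and for `w ∈ W` the vector `P (h x h⁻¹ w)` does not depend on
`h ∈ H`, so `P (x w)` is `P` applied to the average of `y x y⁻¹ w` over `y ∈ S`. That average is a
central operator, hence scalar by Schur's lemma, and `P (x w) ∈ ℂ w`. If moreover every element of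
`S` is of the form `x h` with `x` as above and `h ∈ H`, then `P (y w) ∈ ℂ w` for all `y ∈ S`. As the
orbit of a nonzero `w` spans `V`, this gives `W = P V ⊆ ℂ w`, so `dim W ≤ 1`.

For `S = SG₂` and `H = HG₁` the elements `x = ((g, 1), 1)` do the job: `C(x)` contains
`{((1, b), 1)}`, and `((a, b), σ) = ((a b⁻¹, 1), 1) · ((b, b), σ)`.
-/

open scoped BigOperators


/-- Every permutation of `Fin 2` is the identity or the transposition. -/
lemma perm_fin_two_cases (σ : Equiv.Perm (Fin 2)) :
    σ = 1 ∨ σ = Equiv.swap 0 1 := by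
  revert σ; decide

/-- The action of `S₂ = Equiv.Perm (Fin 2)` on `G × G` permuting the two coordinates. -/
def permProdAut (G : Type) [Group G] : Equiv.Perm (Fin 2) →* MulAut (G × G) where
  toFun σ := if σ = 1 then 1 else (MulEquiv.prodComm : G × G ≃* G × G)
  map_one' := if_pos rfl
  map_mul' σ τ := by
    have hswap : ((MulEquiv.prodComm : G × G ≃* G × G)) * ((MulEquiv.prodComm : G × G ≃* G × G)) = 1 :=
      MulEquiv.ext fun p => rfl
    have hne : Equiv.swap (0 : Fin 2) 1 ≠ 1 := by decide
    rcases perm_fin_two_cases σ with hσ | hσ <;> rcases perm_fin_two_cases τ with hτ | hτ <;>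
      subst hσ <;> subst hτ <;>
      simp [Equiv.swap_mul_self, hne, hswap]

/-- `SG₂ = G ≀ S₂`, realized as the semidirect product `(G × G) ⋊ S₂`. -/
abbrev SG2 (G : Type) [Group G] := (G × G) ⋊[permProdAut G] Equiv.Perm (Fin 2)

lemma permProdAut_diag (G : Type) [Group G] (σ : Equiv.Perm (Fin 2)) (p : G × G)
    (hp : p.1 = p.2) : (permProdAut G σ p).1 = (permProdAut G σ p).2 := by
  by_cases h : σ = 1 <;> simp [permProdAut, h, hp]

/-- `HG₁ = {((g,g),σ)} ≤ SG₂`. -/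
def HG1 (G : Type) [Group G] : Subgroup (SG2 G) where
  carrier := {x | x.left.1 = x.left.2}
  one_mem' := rfl
  mul_mem' := by
    intro a b ha hb
    simp only [Set.mem_setOf_eq] at *
    rw [SemidirectProduct.mul_left, Prod.fst_mul, Prod.snd_mul, ha,
      permProdAut_diag G a.right b.left hb]
  inv_mem' := by
    intro a ha
    simp only [Set.mem_setOf_eq] at *
    rw [SemidirectProduct.inv_left]
    exact permProdAut_diag G a.right⁻¹ a.left⁻¹ (by rw [Prod.fst_inv, Prod.snd_inv, ha])

open CategoryTheory Module

/-- Simplicity in the category `FDRep` gives irreducibility in the sense of invariant subspaces: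
the inclusion of a nonzero invariant subspace is a nonzero monomorphism, so an isomorphism. -/
lemma FDRep.eq_top_of_invariant {S : Type} [Group S] (ψ : FDRep ℂ S) [Simple ψ]
    (U : Submodule ℂ ψ) (hU : ∀ s, ∀ v ∈ U, ψ.ρ s v ∈ U) (h0 : U ≠ ⊥) : U = ⊤ := by
  let σ : S →* (U →ₗ[ℂ] U) :=
    { toFun := fun s => (ψ.ρ s).restrict (hU s)
      map_one' := by ext; simp
      map_mul' := fun a b => by ext; simp }
  let f : FDRep.of σ ⟶ ψ :=
    { hom := FGModuleCat.ofHom U.subtype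
      comm := fun s => by
        ext v
        rfl }
  have hinj : Function.Injective f.hom := Subtype.val_injective
  have : Mono f := by
    have : Mono ((forget (FDRep ℂ S)).map f) := (mono_iff_injective _).2 hinj
    exact (forget (FDRep ℂ S)).mono_of_mono_map this
  have hf : f ≠ 0 := by
    intro hf
    apply h0
    rw [eq_bot_iff]
    intro v hv
    have : f.hom.hom.hom (⟨v, hv⟩ : U) = 0 := by rw [hf]; rfl
    exact this
  have : IsIso f := isIso_of_mono_of_nonzero hf
  rw [eq_top_iff]
  intro v _
  have := ((FDRep.isoToLinearEquiv (asIso f)).apply_symm_apply v)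
  rw [← this]
  exact ((FDRep.isoToLinearEquiv (asIso f)).symm v : U).2

/-- Schur's lemma, for a representation given without bundling: an operator commuting with an
irreducible action is scalar, since its eigenspaces are invariant. -/
lemma exists_scalar_of_commute {S V : Type*} [Group S] [AddCommGroup V] [Module ℂ V]
    [FiniteDimensional ℂ V] [Nontrivial V] (ρ : Representation ℂ S V)
    (hirr : ∀ U : Submodule ℂ V, (∀ s, ∀ v ∈ U, ρ s v ∈ U) → U ≠ ⊥ → U = ⊤)
    (A : End ℂ V) (hA : ∀ s v, A (ρ s v) = ρ s (A v)) : ∃ c : ℂ, ∀ v, A v = c • v := by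
  obtain ⟨c, hc⟩ := End.exists_eigenvalue A
  refine ⟨c, fun v => ?_⟩
  have htop : End.eigenspace A c = ⊤ := by
    refine hirr _ (fun s v hv => ?_) hc
    rw [End.mem_eigenspace_iff] at hv ⊢
    rw [hA, hv, map_smul]
  exact End.mem_eigenspace_iff.1 (htop ▸ Submodule.mem_top)

/-- The representation `χ⁻¹ ⊗ Res_H ρ`; its invariants are the vectors on which `H` acts
through `χ`. -/
def twistRes {S V : Type*} [Group S] [AddCommGroup V] [Module ℂ V]
    (ρ : Representation ℂ S V) (H : Subgroup S) (χ : H →* ℂˣ) : Representation ℂ H V where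
  toFun h := ((χ h)⁻¹ : ℂˣ) • ρ h
  map_one' := by simp
  map_mul' a b := by
    ext v
    simp only [Units.smul_def, LinearMap.smul_apply, End.mul_apply, map_mul, map_smul, smul_smul,
      mul_inv, Units.val_mul, Subgroup.coe_mul]
    rw [mul_comm]

lemma twistRes_apply {S V : Type*} [Group S] [AddCommGroup V] [Module ℂ V]
    (ρ : Representation ℂ S V) (H : Subgroup S) (χ : H →* ℂˣ) (h : H) (v : V) :
    twistRes ρ H χ h v = ((χ h : ℂ))⁻¹ • ρ h v := by
  simp [twistRes, Units.smul_def]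

/-- The multiplicity of `χ` in the restriction to `H` of an irreducible representation is at most
one, as soon as every element is a product `x * h` with `h ∈ H` and `S = H · C(x)`. -/
lemma finrank_invariants_twistRes_le_one {S V : Type*} [Group S] [Finite S] [AddCommGroup V]
    [Module ℂ V] [FiniteDimensional ℂ V] (ρ : Representation ℂ S V)
    (hirr : ∀ U : Submodule ℂ V, (∀ s, ∀ v ∈ U, ρ s v ∈ U) → U ≠ ⊥ → U = ⊤)
    (H : Subgroup S) (χ : H →* ℂˣ)
    (hfac : ∀ y : S, ∃ x : S, ∃ h : H, y = x * h ∧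
      ∀ z : S, ∃ k : H, ∃ c : S, Commute c x ∧ z = k * c) :
    finrank ℂ (twistRes ρ H χ).invariants ≤ 1 := by
  classical
  have := Fintype.ofFinite S
  have := Fintype.ofFinite H
  have : Invertible (Fintype.card H : ℂ) := invertibleOfNonzero (by simp)
  set τ := twistRes ρ H χ with hτ
  set P := τ.averageMap with hP
  have hPτ : ∀ h v, P (τ h v) = P v := by
    intro h v
    rw [hP, Representation.averageMap, ← Representation.asAlgebraHom_single_one,
      ← End.mul_apply, ← map_mul, GroupAlgebra.mul_average_right]
  have hPρ : ∀ (h : H) v, P (ρ h v) = (χ h : ℂ) • P v := by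
    intro h v
    rw [← hPτ h v, hτ, twistRes_apply, map_smul, smul_smul, mul_inv_cancel₀ (Units.ne_zero _),
      one_smul]
  have hW : ∀ w ∈ τ.invariants, ∀ h : H, ρ h w = (χ h : ℂ) • w := by
    intro w hw h
    have := hw h
    rw [hτ, twistRes_apply] at this
    nth_rewrite 2 [← this]
    rw [smul_smul, mul_inv_cancel₀ (Units.ne_zero _), one_smul]
  by_cases hbot : τ.invariants = ⊥
  · rw [hbot]; simp
  obtain ⟨w, hw, hw0⟩ := Submodule.exists_mem_ne_zero_of_ne_bot hbot
  have : Nontrivial V := ⟨w, 0, hw0⟩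
  have key : ∀ y : S, P (ρ y w) ∈ Submodule.span ℂ {w} := by
    intro y
    obtain ⟨x, h, rfl, hx⟩ := hfac y
    have hconj : ∀ z : S, P (ρ (z * x * z⁻¹) w) = P (ρ x w) := by
      intro z
      obtain ⟨k, c, hc, rfl⟩ := hx z
      have : (k : S) * c * x * ((k : S) * c)⁻¹ = k * x * ((k⁻¹ : H) : S) := by
        rw [mul_assoc (k : S) c x, hc.eq]; simp [mul_assoc]
      rw [this, map_mul, map_mul, End.mul_apply, End.mul_apply, hPρ, hW w hw, map_smul, map_smul,
        smul_smul]
      simp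
    obtain ⟨c, hc⟩ := exists_scalar_of_commute ρ hirr (∑ z : S, ρ (z * x * z⁻¹)) (by
      intro s v
      simp only [LinearMap.sum_apply, map_sum]
      simp only [← End.mul_apply, ← map_mul]
      refine Fintype.sum_equiv (Equiv.mulLeft s⁻¹) _ _ fun z => ?_
      simp [mul_assoc])
    have hsum : (Fintype.card S : ℂ) • P (ρ x w) = c • w := by
      have h1 := congrArg P (hc w)
      rw [LinearMap.sum_apply, map_sum, Finset.sum_congr rfl fun z _ => hconj z, map_smul,
        τ.averageMap_id w hw] at h1
      rw [← h1, Finset.sum_const, Finset.card_univ, Nat.cast_smul_eq_nsmul]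
    have hcard : (Fintype.card S : ℂ) ≠ 0 := by simp
    rw [map_mul, End.mul_apply, hW w hw, map_smul, map_smul]
    refine Submodule.smul_mem _ _ (Submodule.mem_span_singleton.2
      ⟨(Fintype.card S : ℂ)⁻¹ * c, ?_⟩)
    rw [mul_smul, ← hsum, smul_smul, inv_mul_cancel₀ hcard, one_smul]
  have hspan : Submodule.span ℂ (Set.range fun y => ρ y w) = ⊤ := by
    refine hirr _ (fun s v hv => ?_) (fun hb => hw0 ?_)
    · refine Submodule.span_induction (p := fun v _ => ρ s v ∈ _) ?_ (by simp) ?_ ?_ hv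
      · rintro _ ⟨y, rfl⟩
        exact Submodule.subset_span ⟨s * y, by simp⟩
      · intro a b _ _ ha hb
        rw [map_add]; exact Submodule.add_mem _ ha hb
      · intro r a _ ha
        rw [map_smul]; exact Submodule.smul_mem _ _ ha
    · have : w ∈ Submodule.span ℂ (Set.range fun y => ρ y w) :=
        Submodule.subset_span ⟨1, by simp⟩
      rwa [hb, Submodule.mem_bot] at this
  have hle : τ.invariants ≤ Submodule.span ℂ {w} := by
    intro v hv
    have hall : (⊤ : Submodule ℂ V) ≤ (Submodule.span ℂ {w}).comap P := by
      rw [← hspan, Submodule.span_le]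
      rintro _ ⟨y, rfl⟩
      exact key y
    rw [← τ.averageMap_id v hv]
    exact hall Submodule.mem_top
  exact (Submodule.finrank_mono hle).trans (finrank_span_singleton hw0).le

/-- The linear character `ξ ⊗ ε` of `HG₁`. -/
def charHG1 {G : Type} [Group G] (ξ : G →* ℂˣ) (ε : Equiv.Perm (Fin 2) →* ℂˣ) :
    HG1 G →* ℂˣ where
  toFun h := ξ h.val.left.1 * ε h.val.right
  map_one' := by simp
  map_mul' a b := by
    -- coordinate permutations fix the diagonal, so the action is invisible to `ξ`
    have hb : (permProdAut G a.val.right b.val.left).1 = b.val.left.1 := by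
      have : b.val.left.1 = b.val.left.2 := b.2
      by_cases h : a.val.right = 1 <;> simp [permProdAut, h, this]
    simp only [Subgroup.coe_mul, SemidirectProduct.mul_left, SemidirectProduct.mul_right,
      Prod.fst_mul, map_mul, hb]
    exact mul_mul_mul_comm _ _ _ _

lemma SG2_factor {G : Type} [Group G] (y : SG2 G) : ∃ x : SG2 G, ∃ h : HG1 G, y = x * h ∧
    ∀ z : SG2 G, ∃ k : HG1 G, ∃ c : SG2 G, Commute c x ∧ z = k * c := by
  obtain ⟨⟨a, b⟩, σ⟩ := y
  refine ⟨⟨(a * b⁻¹, 1), 1⟩, ⟨⟨(b, b), σ⟩, rfl⟩, ?_, ?_⟩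
  · ext <;> simp
  · rintro ⟨⟨p, q⟩, π⟩
    rcases eq_or_ne π 1 with rfl | hπ
    · refine ⟨⟨⟨(p, p), 1⟩, rfl⟩, ⟨(1, p⁻¹ * q), 1⟩, ?_, ?_⟩
      · ext <;> simp
      · ext <;> simp
    · -- the transposition moves the second coordinate of `c` to the first
      refine ⟨⟨⟨(q, q), π⟩, rfl⟩, ⟨(1, q⁻¹ * p), 1⟩, ?_, ?_⟩
      · ext <;> simp
      · refine SemidirectProduct.ext ?_ ?_
        · rw [SemidirectProduct.mul_left]
          simp [permProdAut, hπ]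
        · simp [-SemidirectProduct.mk_eq_inl_mul_inr]

/-- For every linear character `ξ` of a finite group `G`, every linear
character `ε` of `S₂` and every irreducible character `ψ` of `SG₂ = G ≀ S₂`, the multiplicity
`⟨Res_{HG₁} ψ, ξ⊗ε⟩ = (1/|HG₁|) ∑_{h ∈ HG₁} ψ(h)·conj((ξ⊗ε)(h))` equals `0` or `1`;
that is, `(SG₂, HG₁, ξ⊗ε)` is a Gelfand triple. -/
theorem gelfand_triple_SG2 (G : Type) [Group G] [Fintype G]
    (ξ : G →* ℂˣ) (ε : Equiv.Perm (Fin 2) →* ℂˣ)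
    (ψ : FDRep ℂ (SG2 G)) [CategoryTheory.Simple ψ] :
    (Nat.card (HG1 G) : ℂ)⁻¹ *
        ∑ᶠ h : (HG1 G), ψ.character h.val *
          (starRingEnd ℂ) ((ξ h.val.left.1 : ℂ) * (ε h.val.right : ℂ)) = 0 ∨
    (Nat.card (HG1 G) : ℂ)⁻¹ *
        ∑ᶠ h : (HG1 G), ψ.character h.val *
          (starRingEnd ℂ) ((ξ h.val.left.1 : ℂ) * (ε h.val.right : ℂ)) = 1 := by
  classical
  have : Finite (SG2 G) := Finite.of_equiv _ SemidirectProduct.equivProd.symm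
  have := Fintype.ofFinite (HG1 G)
  have : Invertible (Nat.card (HG1 G) : ℂ) := invertibleOfNonzero (by simp)
  have hle := finrank_invariants_twistRes_le_one ψ.ρ ψ.eq_top_of_invariant (HG1 G) (charHG1 ξ ε)
    SG2_factor
  have hterm : ∀ h : HG1 G, ψ.character h.val *
      (starRingEnd ℂ) ((ξ h.val.left.1 : ℂ) * (ε h.val.right : ℂ)) =
      (twistRes ψ.ρ (HG1 G) (charHG1 ξ ε)).character h := by
    intro h
    -- values of a linear character of a finite group are roots of unity
    have hnorm : ‖((charHG1 ξ ε h : ℂˣ) : ℂ)‖ = 1 :=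
      ((Units.coeHom ℂ).isOfFinOrder
        ((charHG1 ξ ε).isOfFinOrder (isOfFinOrder_of_finite h))).norm_eq_one
    have hval : (ξ h.val.left.1 : ℂ) * (ε h.val.right : ℂ) = ((charHG1 ξ ε h : ℂˣ) : ℂ) := by
      simp [charHG1]
    have htw : twistRes ψ.ρ (HG1 G) (charHG1 ξ ε) h =
        ((charHG1 ξ ε h : ℂ))⁻¹ • ψ.ρ h.val :=
      LinearMap.ext fun v => twistRes_apply _ _ _ _ _
    rw [hval, ← Complex.inv_eq_conj hnorm, Representation.character, htw, map_smul, smul_eq_mul,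
      mul_comm]
    rfl
  rw [finsum_eq_sum_of_fintype, Finset.sum_congr rfl fun h _ => hterm h,
    Representation.card_inv_mul_sum_char_eq_finrank]
  rcases Nat.le_one_iff_eq_zero_or_eq_one.1 hle with h | h
  · left; rw [h]; simp
  · right; rw [h]; simp
end

section
/- Let G be a finite group, ξ a linear character of G, χ an irreducible character of G, and let ε, ε₁ ∈ {1, −1} ⊆ ℂ. Then (1/(2|G|))·∑_{g∈G} conj(ξ(g))·(χ(g)² + ε₁·ε·χ(g²)) equals 1 if χ = χ̄⊗ξ and ε₁ = ν₂^ξ(χ)·ε, and equals 0 otherwise. -/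
open scoped BigOperators

/-!
Let `A = |G|⁻¹ ∑ conj(ξ g) χ(g)²` and `ν = |G|⁻¹ ∑ conj(ξ g) χ(g²)`, so that the quantity in the
theorem is `(A + ε₁ ε ν) / 2`.

* Since `conj(χ(g)) = χ(g⁻¹)` and `conj(ξ(g)) = ξ(g)⁻¹`, `A` is the scalar product of `χ` with the
  character `χ̄⊗ξ` of the representation `V* ⊗ ξ`. The latter has norm one, hence is irreducible,
  and orthogonality gives `A = 1` if `χ = χ̄⊗ξ` and `A = 0` otherwise (`average_sq`).
* After the choice of a basis of `V`, let `G` act on square matrices by `X ↦ ξ(g)⁻¹ R(g) X R(g)ᵀ`.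
  This action has character `ξ⁻¹ χ²`, so its space of invariants has dimension `A`. The
  transposition `T` preserves the invariants, and `ν` is the trace of `T` composed with the
  averaging projection. If `A = 0` the projection vanishes and `ν = 0`; if `A = 1`, then `T` acts
  on the line of invariants by a sign, and `ν` is that sign (`twisted_indicator`).
-/

namespace TwistedFS

open Matrix

section MatrixRep

variable {G : Type} [Group G] {n : Type} [Fintype n] [DecidableEq n]

/-- The representation of `G` on square matrices given by `X ↦ ξ(g)⁻¹ R(g) X R(g)ᵀ`, i.e. the
tensor square of `R` twisted by `ξ⁻¹`. -/
def formRep (ξ : G →* ℂˣ) (R : G →* Matrix n n ℂ) : Representation ℂ G (Matrix n n ℂ) where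
  toFun g := ((ξ g)⁻¹ : ℂˣ).val • (LinearMap.mulLeft ℂ (R g) ∘ₗ LinearMap.mulRight ℂ (R g)ᵀ)
  map_one' := by ext1 X; simp
  map_mul' g h := by
    ext1 X
    simp [Matrix.mul_assoc, smul_smul, mul_comm]

lemma formRep_apply (ξ : G →* ℂˣ) (R : G →* Matrix n n ℂ) (g : G) (X : Matrix n n ℂ) :
    formRep ξ R g X = (ξ g : ℂ)⁻¹ • (R g * X * (R g)ᵀ) := by
  simp [formRep, Matrix.mul_assoc]

lemma formRep_transpose (ξ : G →* ℂˣ) (R : G →* Matrix n n ℂ) (g : G) (X : Matrix n n ℂ) :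
    formRep ξ R g Xᵀ = (formRep ξ R g X)ᵀ := by
  simp [formRep_apply, Matrix.transpose_mul, Matrix.mul_assoc]

/-- The trace of an endomorphism of the space of matrices, in the basis of matrix units. -/
lemma trace_matrix_end (f : Matrix n n ℂ →ₗ[ℂ] Matrix n n ℂ) :
    LinearMap.trace ℂ _ f = ∑ i, ∑ j, f (Matrix.single i j 1) i j := by
  rw [LinearMap.trace_eq_matrix_trace ℂ (Matrix.stdBasis ℂ n n), Matrix.trace,
    Fintype.sum_prod_type]
  refine Finset.sum_congr rfl fun i _ => Finset.sum_congr rfl fun j _ => ?_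
  rw [Matrix.diag_apply, LinearMap.toMatrix_apply, Matrix.stdBasis_eq_single]
  rfl

lemma formRep_character (ξ : G →* ℂˣ) (R : G →* Matrix n n ℂ) (g : G) :
    (formRep ξ R).character g = (ξ g : ℂ)⁻¹ * (R g).trace ^ 2 := by
  rw [Representation.character, trace_matrix_end]
  simp only [formRep_apply, Matrix.smul_apply, smul_eq_mul, ← Finset.mul_sum]
  congr 1
  rw [sq, Matrix.trace, Finset.sum_mul_sum]
  refine Finset.sum_congr rfl fun i _ => Finset.sum_congr rfl fun j _ => ?_
  simp [Matrix.mul_apply, Matrix.single_apply, ite_and]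

/-- Transposition as a linear endomorphism. -/
def T : Matrix n n ℂ →ₗ[ℂ] Matrix n n ℂ := (Matrix.transposeLinearEquiv n n ℂ ℂ).toLinearMap

lemma T_apply (X : Matrix n n ℂ) : T X = Xᵀ := rfl

lemma trace_transpose_formRep (ξ : G →* ℂˣ) (R : G →* Matrix n n ℂ) (g : G) :
    LinearMap.trace ℂ _ (T ∘ₗ formRep ξ R g) = (ξ g : ℂ)⁻¹ * (R (g ^ 2)).trace := by
  rw [trace_matrix_end]
  simp only [T_apply, LinearMap.comp_apply, formRep_apply, Matrix.smul_apply, smul_eq_mul, ← Finset.mul_sum, Matrix.transpose_apply]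
  congr 1
  rw [sq, map_mul, Matrix.trace]
  refine Finset.sum_congr rfl fun i _ => ?_
  rw [Matrix.diag_apply, Matrix.mul_apply]
  refine Finset.sum_congr rfl fun j _ => ?_
  simp [Matrix.mul_apply, Matrix.single_apply, ite_and, mul_comm]

variable [Fintype G]

/-- Twisted Frobenius–Schur: if the space of invariant matrices has dimension `A ∈ {0, 1}`, then
the indicator is `0` when `A = 0` and a sign when `A = 1`. -/
lemma twisted_indicator (ξ : G →* ℂˣ) (R : G →* Matrix n n ℂ) (A ν : ℂ)
    (hA : A = (Fintype.card G : ℂ)⁻¹ * ∑ g, (ξ g : ℂ)⁻¹ * (R g).trace ^ 2)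
    (hν : ν = (Fintype.card G : ℂ)⁻¹ * ∑ g, (ξ g : ℂ)⁻¹ * (R (g ^ 2)).trace) :
    (A = 0 → ν = 0) ∧ (A = 1 → ν = 1 ∨ ν = -1) := by
  have hc : (Fintype.card G : ℂ) ≠ 0 := by exact_mod_cast Fintype.card_ne_zero
  let : Invertible (Fintype.card G : ℂ) := invertibleOfNonzero hc
  let : Invertible (Nat.card G : ℂ) := invertibleOfNonzero (by simp)
  set τ := formRep ξ R with hτ
  have hproj := Representation.isProj_averageMap τ
  have hfin : A = Module.finrank ℂ τ.invariants := by
    rw [hA, ← τ.card_inv_mul_sum_char_eq_finrank, Nat.card_eq_fintype_card]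
    simp [hτ, formRep_character]
  have htr : ν = LinearMap.trace ℂ _ (T ∘ₗ τ.averageMap) := by
    have : T ∘ₗ τ.averageMap = (Fintype.card G : ℂ)⁻¹ • ∑ g, T ∘ₗ τ g := by
      ext1 X
      simp [Representation.averageMap, GroupAlgebra.average, map_sum]
    rw [this, hν, map_smul, map_sum]
    simp [hτ, trace_transpose_formRep]
  have hT : ∀ X ∈ τ.invariants, Xᵀ ∈ τ.invariants := by
    intro X hX g
    rw [hτ, formRep_transpose, hX g]
  constructor
  · intro h0
    have hbot : τ.invariants = ⊥ := by
      rw [h0] at hfin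
      exact Submodule.finrank_eq_zero.mp (by exact_mod_cast hfin.symm)
    have : τ.averageMap = 0 := by
      ext1 X
      have := hproj.map_mem X
      rw [hbot] at this
      simpa using this
    rw [htr, this]
    simp
  · intro h1
    have hone : Module.finrank ℂ τ.invariants = 1 := by
      rw [h1] at hfin
      exact_mod_cast hfin.symm
    obtain ⟨⟨X, hX⟩, hX0, hspan⟩ := finrank_eq_one_iff'.mp hone
    obtain ⟨c, hcX⟩ := hspan ⟨Xᵀ, hT X hX⟩
    have hcX : c • X = Xᵀ := congrArg Subtype.val hcX
    have hX0 : X ≠ 0 := fun h => hX0 (Subtype.ext h)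
    have hcc : c * c = 1 := by
      have h2 : (c * c) • X = (1 : ℂ) • X := by
        rw [mul_smul, hcX, ← Matrix.transpose_smul, hcX, Matrix.transpose_transpose, one_smul]
      exact smul_left_injective ℂ hX0 h2
    have hTc : T ∘ₗ τ.averageMap = c • τ.averageMap := by
      ext1 Y
      obtain ⟨d, hd⟩ := hspan ⟨_, hproj.map_mem Y⟩
      have hd : d • X = τ.averageMap Y := congrArg Subtype.val hd
      simp only [LinearMap.comp_apply, LinearMap.smul_apply, ← hd, T_apply,
        Matrix.transpose_smul, ← hcX]
      rw [smul_comm]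
    have : ν = c := by
      rw [htr, hTc, map_smul, hproj.trace, hone]
      simp
    rw [this]
    exact mul_self_eq_one_iff.mp hcc

open scoped ComplexOrder in
/-- `R` preserves the positive definite form `H = ∑ R(h)ᴴ R(h)`, so `R(g)ᴴ` is conjugate
to `R(g)⁻¹`. -/
lemma conj_trace (R : G →* Matrix n n ℂ) (g : G) :
    (starRingEnd ℂ) (R g).trace = (R g⁻¹).trace := by
  classical
  set H : Matrix n n ℂ := ∑ h, (R h)ᴴ * R h with hH
  have hpos : H.PosDef := by
    rw [hH, ← Finset.add_sum_erase _ _ (Finset.mem_univ (1 : G))]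
    refine Matrix.PosDef.add_posSemidef ?_
      (Matrix.posSemidef_sum _ fun h _ => Matrix.posSemidef_conjTranspose_mul_self _)
    simpa using Matrix.PosDef.one
  have hinv : (R g)ᴴ * H * R g = H := by
    rw [hH, Finset.mul_sum, Finset.sum_mul]
    refine Fintype.sum_equiv (Equiv.mulRight g) _ _ fun h => ?_
    simp [Matrix.conjTranspose_mul, Matrix.mul_assoc]
  have hRR : R g * R g⁻¹ = 1 := by rw [← map_mul]; simp
  have hHu : IsUnit H.det := (Matrix.isUnit_iff_isUnit_det _).mp hpos.isUnit
  have hconj : (R g)ᴴ = H * R g⁻¹ * H⁻¹ := by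
    have h1 : (R g)ᴴ * H = H * R g⁻¹ := by
      calc (R g)ᴴ * H = (R g)ᴴ * H * (R g * R g⁻¹) := by rw [hRR, Matrix.mul_one]
        _ = H * R g⁻¹ := by rw [← Matrix.mul_assoc, hinv]
    rw [← h1, Matrix.mul_assoc, Matrix.mul_nonsing_inv _ hHu, Matrix.mul_one]
  rw [starRingEnd_apply, ← Matrix.trace_conjTranspose, hconj, Matrix.trace_mul_comm,
    ← Matrix.mul_assoc, Matrix.nonsing_inv_mul _ hHu, Matrix.one_mul]

end MatrixRep

variable {G : Type} [Group G] [Fintype G]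

lemma conj_linear (ξ : G →* ℂˣ) (g : G) : (starRingEnd ℂ) (ξ g : ℂ) = (ξ g : ℂ)⁻¹ := by
  have h : ‖(ξ g : ℂ)‖ = 1 := by
    refine Complex.norm_eq_one_of_pow_eq_one (n := Fintype.card G) ?_ Fintype.card_ne_zero
    rw [← Units.val_pow_eq_pow_val, ← map_pow, pow_card_eq_one, map_one, Units.val_one]
  exact (Complex.inv_eq_conj h).symm

/-- The matrices of a representation in a chosen basis. -/
noncomputable def matrixHom (V : FDRep ℂ G) :
    G →* Matrix (Fin (Module.finrank ℂ V)) (Fin (Module.finrank ℂ V)) ℂ :=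
  ((LinearMap.toMatrixAlgEquiv (Module.finBasis ℂ V) : _ →* _)).comp V.ρ

lemma trace_matrixHom (V : FDRep ℂ G) (g : G) : (matrixHom V g).trace = V.character g :=
  (LinearMap.trace_eq_matrix_trace ℂ (Module.finBasis ℂ V) (V.ρ g)).symm

lemma conj_character (V : FDRep ℂ G) (g : G) :
    (starRingEnd ℂ) (V.character g) = V.character g⁻¹ := by
  rw [← trace_matrixHom, ← trace_matrixHom, conj_trace]

/-- The representation `V* ⊗ ξ`, whose character is `χ̄⊗ξ`. -/
noncomputable def twistedDual (ξ : G →* ℂˣ) (V : FDRep ℂ G) :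
    Representation ℂ G (Module.Dual ℂ V) where
  toFun g := (ξ g : ℂ) • Representation.dual V.ρ g
  map_one' := by
    rw [map_one, map_one, Units.val_one, one_smul]
  map_mul' g h := by
    simp only [map_mul, Units.val_mul, smul_mul_smul_comm]

lemma twistedDual_character (ξ : G →* ℂˣ) (V : FDRep ℂ G) (g : G) :
    (FDRep.of (twistedDual ξ V)).character g = ξ g * V.character g⁻¹ := by
  have h : (FDRep.of (twistedDual ξ V)).character g =
      LinearMap.trace ℂ _ ((ξ g : ℂ) • Representation.dual V.ρ g) := rfl
  rw [h, map_smul, smul_eq_mul, ← FDRep.char_dual]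
  rfl

open scoped Classical in
lemma average_sq (ξ : G →* ℂˣ) (V : FDRep ℂ G) [CategoryTheory.Simple V] :
    (Fintype.card G : ℂ)⁻¹ * ∑ g, (ξ g : ℂ)⁻¹ * V.character g ^ 2 =
      if ∀ g : G, V.character g = (starRingEnd ℂ) (V.character g) * (ξ g : ℂ) then 1 else 0 := by
  have hc : (Fintype.card G : ℂ) ≠ 0 := by exact_mod_cast Fintype.card_ne_zero
  let : Invertible (Nat.card G : ℂ) := invertibleOfNonzero (by simp)
  set W := FDRep.of (twistedDual ξ V)
  have hW : ∀ g, W.character g = ξ g * V.character g⁻¹ := twistedDual_character ξ V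
  have hnorm := (FDRep.simple_iff_char_is_norm_one V).mp inferInstance
  have : CategoryTheory.Simple W := by
    rw [FDRep.simple_iff_char_is_norm_one, ← hnorm]
    refine Finset.sum_congr rfl fun g _ => ?_
    have := (ξ g).ne_zero
    rw [hW, hW, inv_inv, map_inv, Units.val_inv_eq_inv_val]
    field_simp
  have horth := FDRep.char_orthonormal V W
  have hsum : ∑ g, V.character g * W.character g⁻¹ = ∑ g, (ξ g : ℂ)⁻¹ * V.character g ^ 2 := by
    refine Finset.sum_congr rfl fun g _ => ?_
    rw [hW, inv_inv, map_inv, Units.val_inv_eq_inv_val]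
    ring
  rw [hsum, Nat.card_eq_fintype_card] at horth
  split_ifs with h
  · have : ∑ g, (ξ g : ℂ)⁻¹ * V.character g ^ 2 = ∑ g, V.character g * V.character g⁻¹ := by
      refine Finset.sum_congr rfl fun g _ => ?_
      have h0 := (ξ g).ne_zero
      have hg := h g
      rw [conj_character] at hg
      rw [sq]
      nth_rewrite 2 [hg]
      field_simp
    rw [this, hnorm, Nat.card_eq_fintype_card, inv_mul_cancel₀ hc]
  · rw [horth, if_neg]
    rintro ⟨i⟩
    refine h fun g => ?_
    rw [conj_character, mul_comm, ← hW, FDRep.char_iso i]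

end TwistedFS

/-- Let `G` be a finite group, `ξ` a linear character of `G`, `χ` the character
of an irreducible complex representation of `G`, and `ε, ε₁ ∈ {1, -1} ⊆ ℂ`.  Then
`(1/(2|G|)) ∑_{g∈G} conj(ξ g) * (χ(g)² + ε₁ ε χ(g²))` equals `1` if `χ = χ̄⊗ξ` and
`ε₁ = ν₂^ξ(χ) ε`, and equals `0` otherwise. -/
theorem twisted_fs_multiplicity (G : Type) [Group G] [Fintype G]
    (ξ : G →* ℂˣ) (V : FDRep ℂ G) [CategoryTheory.Simple V]
    (ε ε₁ : ℂ) (hε : ε = 1 ∨ ε = -1) (hε₁ : ε₁ = 1 ∨ ε₁ = -1) :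
    (((∀ g : G, V.character g = (starRingEnd ℂ) (V.character g) * (ξ g : ℂ)) ∧
        ε₁ = ((Fintype.card G : ℂ)⁻¹ *
          ∑ g : G, (starRingEnd ℂ) (ξ g : ℂ) * V.character (g ^ 2)) * ε) →
      (2 * (Fintype.card G : ℂ))⁻¹ *
        ∑ g : G, (starRingEnd ℂ) (ξ g : ℂ) * (V.character g ^ 2 + ε₁ * ε * V.character (g ^ 2))
          = 1) ∧
    ((¬ ((∀ g : G, V.character g = (starRingEnd ℂ) (V.character g) * (ξ g : ℂ)) ∧
        ε₁ = ((Fintype.card G : ℂ)⁻¹ *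
          ∑ g : G, (starRingEnd ℂ) (ξ g : ℂ) * V.character (g ^ 2)) * ε)) →
      (2 * (Fintype.card G : ℂ))⁻¹ *
        ∑ g : G, (starRingEnd ℂ) (ξ g : ℂ) * (V.character g ^ 2 + ε₁ * ε * V.character (g ^ 2))
          = 0) := by
  classical
  have hA := TwistedFS.average_sq ξ V
  have hν := TwistedFS.twisted_indicator ξ (TwistedFS.matrixHom V) _ _ rfl rfl
  simp only [TwistedFS.trace_matrixHom] at hν
  simp only [TwistedFS.conj_linear]
  have hc : (Fintype.card G : ℂ) ≠ 0 := by exact_mod_cast Fintype.card_ne_zero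
  have hsplit : (2 * (Fintype.card G : ℂ))⁻¹ *
      ∑ g : G, (ξ g : ℂ)⁻¹ * (V.character g ^ 2 + ε₁ * ε * V.character (g ^ 2)) =
      ((Fintype.card G : ℂ)⁻¹ * ∑ g, (ξ g : ℂ)⁻¹ * V.character g ^ 2 +
        ε₁ * ε * ((Fintype.card G : ℂ)⁻¹ * ∑ g, (ξ g : ℂ)⁻¹ * V.character (g ^ 2))) / 2 := by
    have : ∀ g, (ξ g : ℂ)⁻¹ * (V.character g ^ 2 + ε₁ * ε * V.character (g ^ 2)) =
        (ξ g : ℂ)⁻¹ * V.character g ^ 2 + ε₁ * ε * ((ξ g : ℂ)⁻¹ * V.character (g ^ 2)) :=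
      fun g => by ring
    simp only [this, Finset.sum_add_distrib, ← Finset.mul_sum]
    rw [mul_inv]
    ring
  rw [hsplit]
  generalize (Fintype.card G : ℂ)⁻¹ * ∑ g, (ξ g : ℂ)⁻¹ * V.character g ^ 2 = A at *
  generalize (Fintype.card G : ℂ)⁻¹ * ∑ g, (ξ g : ℂ)⁻¹ * V.character (g ^ 2) = ν at *
  split_ifs at hA with h
  · rcases hν.2 hA with rfl | rfl <;> rcases hε with rfl | rfl <;> rcases hε₁ with rfl | rfl <;>
      simp only [hA] <;> norm_num <;> exact h
  · refine ⟨fun h' => absurd h'.1 h, fun _ => ?_⟩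
    rw [hA, hν.1 hA]
    simp
end

section
/- Fix a linear character ξ of G and a linear character ε of S₂. For g ∈ G and σ ∈ S₂, consider the element K = ∑_{x,y ∈ HG₁} (ξ⊗ε)(x·y) · (x * a * y) of the group algebra ℂ[SG₂], where a = ((1,g),σ). Then K = 0 if and only if ξ(g) = −1 and g is conjugate in G to g⁻¹. -/
/-!
Write `χ = ξ⊗ε` and `a = ((1,g),σ)`. The pairs `(x, y) ∈ HG₁ × HG₁` with `x * a * y = a` decide
the matter. A direct computation (`fixing_pair`) shows that such a pair either has
`χ (x * y) = 1`, or has nontrivial permutation parts, in which case `χ (x * y) = ξ g` and the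
`G`-part of `x` conjugates `g` to `g⁻¹`.

If `ξ g = -1` and `g` is conjugate to `g⁻¹`, there is a pair `(x₀, y₀)` with `x₀ * a * y₀ = a` and
`χ (x₀ * y₀) = -1`; translating the summation variables by it gives `K = -K`. Otherwise, since
`g` conjugate to `g⁻¹` forces `ξ g = ±1`, every pair fixing `a` has `χ (x * y) = 1`, so the
coefficient of `K` at `a` is the number of such pairs, which is positive because of `(1, 1)`.
-/

open scoped BigOperators


/-- The linear character `ξ⊗ε` of `HG₁`, with values in `ℂ`. -/
def diagChar {G : Type} [Group G] (ξ : G →* ℂˣ) (ε : Equiv.Perm (Fin 2) →* ℂˣ) :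
    HG1 G →* ℂ where
  toFun x := (ξ x.val.left.1 : ℂ) * (ε x.val.right : ℂ)
  map_one' := by simp
  map_mul' x y := by
    have hy : y.val.left.1 = y.val.left.2 := y.2
    have h : (permProdAut G x.val.right y.val.left).1 = y.val.left.1 := by
      by_cases h : x.val.right = 1 <;> simp [permProdAut, h, hy]
    simp only [Subgroup.coe_mul, SemidirectProduct.mul_left, SemidirectProduct.mul_right,
      Prod.fst_mul, h, map_mul, Units.val_mul]
    ring

lemma permProdAut_swap {G : Type} [Group G] (p : G × G) :
    permProdAut G (Equiv.swap 0 1) p = (p.2, p.1) := by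
  have hne : Equiv.swap (0 : Fin 2) 1 ≠ 1 := by decide
  simp [permProdAut, hne, Prod.swap]

lemma fixing_pair {G : Type} [Group G] (ξ : G →* ℂˣ) (ε : Equiv.Perm (Fin 2) →* ℂˣ)
    (g : G) (σ : Equiv.Perm (Fin 2)) (x y : HG1 G)
    (h : x.val * (⟨(1, g), σ⟩ : SG2 G) * y.val = ⟨(1, g), σ⟩) :
    diagChar ξ ε (x * y) = 1 ∨ (diagChar ξ ε (x * y) = ξ g ∧ IsConj g g⁻¹) := by
  obtain ⟨⟨⟨h₁, h₂⟩, τ⟩, hx⟩ := x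
  obtain ⟨⟨⟨k₁, k₂⟩, ρ⟩, hy⟩ := y
  obtain rfl : h₁ = h₂ := hx
  obtain rfl : k₁ = k₂ := hy
  have hr : τ * σ * ρ = σ := congrArg SemidirectProduct.right h
  have hτρ : τ * ρ = 1 := by
    clear h
    revert τ σ ρ
    decide
  have hdiag : ∀ π : Equiv.Perm (Fin 2), permProdAut G π (k₁, k₁) = (k₁, k₁) := by
    intro π
    rcases perm_fin_two_cases π with rfl | rfl <;> simp [permProdAut_swap]
  have hl := congrArg SemidirectProduct.left h
  rw [map_mul]
  have hχ : diagChar ξ ε ⟨⟨(h₁, h₁), τ⟩, rfl⟩ * diagChar ξ ε ⟨⟨(k₁, k₁), ρ⟩, rfl⟩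
      = (ξ (h₁ * k₁) : ℂ) := by
    have h1 : (ε τ : ℂ) * (ε ρ : ℂ) = 1 := by
      rw [← Units.val_mul, ← map_mul, hτρ, map_one, Units.val_one]
    simp only [diagChar, MonoidHom.coe_mk, OneHom.coe_mk, map_mul, Units.val_mul]
    linear_combination (ξ h₁ : ℂ) * (ξ k₁ : ℂ) * h1
  rw [hχ]
  simp only [SemidirectProduct.mul_left, hdiag] at hl
  rcases perm_fin_two_cases τ with rfl | rfl
  · left
    simp only [map_one, MulAut.one_apply, Prod.mk_mul_mk, Prod.mk.injEq, mul_one] at hl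
    rw [hl.1, map_one, Units.val_one]
  · right
    simp only [permProdAut_swap, Prod.mk_mul_mk, Prod.mk.injEq, mul_one] at hl
    refine ⟨by rw [hl.2], isConj_iff.2 ⟨h₁, ?_⟩⟩
    rw [eq_inv_iff_mul_eq_one]
    -- `h₁ * g * k₁ = 1` and `h₁ * k₁ = g`, so `h₁ * g * h₁⁻¹ * g = 1`
    calc h₁ * g * h₁⁻¹ * g = h₁ * g * h₁⁻¹ * (h₁ * k₁) := by rw [hl.2]
      _ = h₁ * g * k₁ := by group
      _ = 1 := hl.1

/-- The witness for vanishing: if `c` conjugates `g` to `g⁻¹`, then the pair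
`((c,c),s)`, `((c⁻¹g,c⁻¹g),s)`, with `s` the transposition, fixes `a`. -/
lemma exists_fixing_pair {G : Type} [Group G] (ξ : G →* ℂˣ) (ε : Equiv.Perm (Fin 2) →* ℂˣ)
    (g : G) (σ : Equiv.Perm (Fin 2)) (hg : IsConj g g⁻¹) :
    ∃ x y : HG1 G, x.val * (⟨(1, g), σ⟩ : SG2 G) * y.val = ⟨(1, g), σ⟩ ∧
      diagChar ξ ε (x * y) = ξ g := by
  obtain ⟨c, hc⟩ := isConj_iff.1 hg
  refine ⟨⟨⟨(c, c), Equiv.swap 0 1⟩, rfl⟩, ⟨⟨(c⁻¹ * g, c⁻¹ * g), Equiv.swap 0 1⟩, rfl⟩, ?_, ?_⟩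
  · have h1 : c * (g * (c⁻¹ * g)) = 1 := by
      rw [← mul_assoc, ← mul_assoc, hc, inv_mul_cancel]
    ext1
    · rcases perm_fin_two_cases σ with rfl | rfl <;>
        simp [permProdAut_swap, SemidirectProduct.mul_left, mul_assoc, h1]
    · simp only [SemidirectProduct.mul_right]
      decide +revert
  · have h1 : (ε (Equiv.swap 0 1) : ℂ) * (ε (Equiv.swap 0 1) : ℂ) = 1 := by
      rw [← Units.val_mul, ← map_mul, Equiv.swap_mul_self, map_one, Units.val_one]
    have h2 : (ξ c : ℂ) * (ξ (c⁻¹ * g) : ℂ) = ξ g := by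
      rw [← Units.val_mul, ← map_mul, mul_inv_cancel_left]
    rw [map_mul]
    simp only [diagChar, MonoidHom.coe_mk, OneHom.coe_mk]
    linear_combination (ξ g : ℂ) * h1 + (ε (Equiv.swap 0 1) : ℂ) * (ε (Equiv.swap 0 1) : ℂ) * h2

/-- Fix a linear character `ξ` of `G` and a linear character `ε` of `S₂`.
For `g ∈ G` and `σ ∈ S₂`, the element
`K = ∑_{x,y ∈ HG₁} (ξ⊗ε)(x·y) • (x * ((1,g),σ) * y)` of the group algebra `ℂ[SG₂]`
vanishes if and only if `ξ(g) = -1` and `g` is conjugate in `G` to `g⁻¹`. -/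
theorem hecke_basis_vanishing (G : Type) [Group G] [Fintype G]
    (ξ : G →* ℂˣ) (ε : Equiv.Perm (Fin 2) →* ℂˣ) (g : G) (σ : Equiv.Perm (Fin 2)) :
    (∑ᶠ x : (HG1 G), ∑ᶠ y : (HG1 G),
        ((ξ ((x * y).val.left.1) : ℂ) * ((ε ((x * y).val.right) : ℂ))) •
          (MonoidAlgebra.of ℂ (SG2 G) x.val *
            MonoidAlgebra.of ℂ (SG2 G) (⟨(1, g), σ⟩ : SG2 G) *
            MonoidAlgebra.of ℂ (SG2 G) y.val)) = 0 ↔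
      ((ξ g : ℂ) = -1 ∧ IsConj g g⁻¹) := by
  classical
  have : Finite (SG2 G) := Finite.of_injective (fun x => (x.left, x.right)) (fun x y h =>
    SemidirectProduct.ext (congrArg Prod.fst h) (congrArg Prod.snd h))
  have : Fintype (HG1 G) := Fintype.ofFinite _
  set a : SG2 G := ⟨(1, g), σ⟩ with ha
  have hK : (∑ᶠ x : (HG1 G), ∑ᶠ y : (HG1 G),
        ((ξ ((x * y).val.left.1) : ℂ) * ((ε ((x * y).val.right) : ℂ))) •
          (MonoidAlgebra.of ℂ (SG2 G) x.val * MonoidAlgebra.of ℂ (SG2 G) a *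
            MonoidAlgebra.of ℂ (SG2 G) y.val)) =
      ∑ x : HG1 G, ∑ y : HG1 G,
        diagChar ξ ε (x * y) • MonoidAlgebra.of ℂ (SG2 G) (x.val * a * y.val) := by
    simp only [finsum_eq_sum_of_fintype, map_mul (MonoidAlgebra.of ℂ (SG2 G))]
    rfl
  rw [hK]
  constructor
  · intro h0
    by_contra hcon
    have hone : ∀ x y : HG1 G, x.val * a * y.val = a → diagChar ξ ε (x * y) = 1 := by
      intro x y hxy
      rcases fixing_pair ξ ε g σ x y hxy with h | ⟨h, hg⟩
      · exact h
      · obtain ⟨c, hc⟩ := isConj_iff.1 hg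
        have h2 := congrArg ξ hc
        simp only [map_mul, map_inv] at h2
        rw [mul_comm, inv_mul_cancel_left] at h2
        have h3 : (ξ g : ℂ) * (ξ g : ℂ) = 1 := by
          rw [← Units.val_mul, ← Units.val_one, Units.val_inj]
          exact mul_eq_one_iff_eq_inv.2 h2
        rcases mul_self_eq_one_iff.1 h3 with h4 | h4
        · rw [h, h4]
        · exact absurd ⟨h4, hg⟩ hcon
    have hc : ∑ x : HG1 G, ∑ y : HG1 G, (if x.val * a * y.val = a then (1 : ℂ) else 0) = 0 := by
      have h1 := congrArg (fun f : MonoidAlgebra ℂ (SG2 G) => f.coeff a) h0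
      simp only [MonoidAlgebra.coeff_sum, Finsupp.finsetSum_apply, MonoidAlgebra.coeff_smul,
        Finsupp.smul_apply, MonoidAlgebra.of_apply, MonoidAlgebra.coeff_single,
        Finsupp.single_apply, MonoidAlgebra.coeff_zero, Finsupp.zero_apply] at h1
      refine Eq.trans ?_ h1
      refine Finset.sum_congr rfl fun x _ => Finset.sum_congr rfl fun y _ => ?_
      split_ifs with hxy
      · simp [hone x y hxy]
      · simp
    rw [← Fintype.sum_prod_type' (f := fun x y : HG1 G =>
      if x.val * a * y.val = a then (1 : ℂ) else 0), Finset.sum_boole, Nat.cast_eq_zero,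
      Finset.card_eq_zero] at hc
    have : ((1, 1) : HG1 G × HG1 G) ∈
        Finset.univ.filter fun p : HG1 G × HG1 G => p.1.val * a * p.2.val = a := by simp
    simp [hc] at this
  · rintro ⟨hξ, hg⟩
    obtain ⟨x₀, y₀, hfix, hχ⟩ := exists_fixing_pair ξ ε g σ hg
    rw [hξ] at hχ
    suffices h : ∀ K : MonoidAlgebra ℂ (SG2 G), K = -K → K = 0 by
      apply h
      -- substitute `x ↦ x * x₀` and `y ↦ y₀ * y`
      conv_lhs =>
        rw [← Equiv.sum_comp (Equiv.mulRight x₀)]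
        enter [2, x]
        rw [← Equiv.sum_comp (Equiv.mulLeft y₀)]
      simp only [← Finset.sum_neg_distrib]
      refine Finset.sum_congr rfl fun x _ => Finset.sum_congr rfl fun y _ => ?_
      have h1 : ((x * x₀ : HG1 G) : SG2 G) * a * ((y₀ * y : HG1 G) : SG2 G)
          = x.val * a * y.val := by
        conv_rhs => rw [ha, ← hfix]
        simp only [Subgroup.coe_mul, mul_assoc, ha]
      have h2 : diagChar ξ ε (x * x₀ * (y₀ * y)) = - diagChar ξ ε (x * y) := by
        rw [map_mul] at hχ
        simp only [map_mul]
        linear_combination diagChar ξ ε x * diagChar ξ ε y * hχ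
      simp only [Equiv.coe_mulRight, Equiv.coe_mulLeft]
      rw [h1, h2, neg_smul]
    intro K hKneg
    have h2 : (2 : ℂ) • K = 0 := by
      rw [two_smul]
      exact add_eq_zero_iff_eq_neg.2 hKneg
    exact (IsUnit.mk0 (2 : ℂ) two_ne_zero).smul_eq_zero.1 h2
end

section
/- Let G be a finite group and ξ a linear character of G. Then 2·#{irreducible characters χ of G with χ = χ̄⊗ξ} + #{irreducible characters χ of G with χ ≠ χ̄⊗ξ} = 2·|G_{**}| − 2·n_ξ, where |G_{**}| is the number of orbits of the involution C ↦ C⁻¹ on the set of conjugacy classes of G, and n_ξ = #{real conjugacy classes C of G with ξ(C) = −1}. -/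
/-!
The left side equals `#Irr(G) + #{χ : χ = χ̄ ⊗ ξ}`. The number of irreducible characters is the
number of conjugacy classes. The number of fixed points of `χ ↦ χ̄ ⊗ ξ` is the trace of the
operator `F ↦ (C ↦ F(C⁻¹) ξ(C))` on class functions, because this operator permutes the basis of
irreducible characters in that way (`trace_twistMap_irr`). In the basis of indicator functions of
classes the same trace is the sum of `ξ(C)` over the real classes `C`; on these `ξ(C) = ±1`, so the
sum is the number of real classes minus `2 n_ξ` (`trace_twistMap_conj`). Finally, the number of
classes plus the number of real classes is twice the number of orbits of `C ↦ C⁻¹`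
(`two_mul_card_pairs`).

That irreducible characters form a basis of the class functions combines the orthogonality
relations with completeness (`eq_zero_of_orthogonal`), which follows from Schur's lemma and
Maschke's theorem applied to the regular module. The identity `conj χ(g) = χ(g⁻¹)` comes from the
unitary trick (`conj_trace_eq`).
-/

open scoped BigOperators

/-- The inverse of a conjugacy class: the class of `g` is sent to the class of `g⁻¹`. -/
def ConjClasses.inv' {G : Type*} [Group G] : ConjClasses G → ConjClasses G :=
  Quotient.map (·⁻¹) (by
    intro a b h
    change IsConj a b at h
    change IsConj a⁻¹ b⁻¹
    rw [isConj_iff] at h ⊢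
    obtain ⟨c, rfl⟩ := h
    exact ⟨c, by group⟩)

/-- The predicate that `χ : G → ℂ` is the character of an irreducible complex
finite-dimensional representation of `G`. -/
def IsIrredChar (G : Type) [Group G] (χ : G → ℂ) : Prop :=
  ∃ V : FDRep ℂ G, CategoryTheory.Simple V ∧ χ = V.character

/-- `|G_{**}|`: the number of orbits of the involution `C ↦ C⁻¹` on the set of conjugacy
classes of `G` (each orbit being the set `{C, C⁻¹}`). -/
noncomputable def numStarStar (G : Type) [Group G] : ℕ :=
  Nat.card {S : Set (ConjClasses G) // ∃ C : ConjClasses G, S = {C, ConjClasses.inv' C}}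

/-- `n_ξ`: the number of real conjugacy classes of `G` on which `ξ` takes the value `-1`. -/
noncomputable def numXi (G : Type) [Group G] (ξ : G →* ℂˣ) : ℕ :=
  Nat.card {C : ConjClasses G // ConjClasses.inv' C = C ∧
    ∀ g : G, ConjClasses.mk g = C → (ξ g : ℂ) = -1}

/-! ### Orbits of an involution -/

/-- Each orbit `{a, σ a}` contributes `2` to `∑ a, (1 + [σ a = a])`: either two points counted once
or one fixed point counted twice. -/
theorem two_mul_card_pairs {α : Type*} [Finite α] (σ : α → α) (hσ : ∀ a, σ (σ a) = a) :
    2 * Nat.card {S : Set α // ∃ a, S = {a, σ a}} = Nat.card α + Nat.card {a // σ a = a} := by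
  classical
  have := Fintype.ofFinite α
  set O := {S : Set α // ∃ a, S = {a, σ a}}
  let p : α → O := fun a => ⟨{a, σ a}, a, rfl⟩
  have hp : ∀ a b, p b = p a ↔ b = a ∨ b = σ a := by
    intro a b
    constructor
    · intro h
      have h1 : ({b, σ b} : Set α) = {a, σ a} := congrArg Subtype.val h
      have : b ∈ ({a, σ a} : Set α) := h1 ▸ Set.mem_insert _ _
      simpa using this
    · rintro (rfl | rfl)
      · rfl
      · apply Subtype.ext
        change ({σ a, σ (σ a)} : Set α) = {a, σ a}
        rw [hσ, Set.pair_comm]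
  have := Fintype.ofFinite O
  have key : ∑ a : α, (1 + if σ a = a then 1 else 0) = ∑ _S : O, 2 := by
    rw [← Finset.sum_fiberwise (s := Finset.univ) (g := p)]
    refine Finset.sum_congr rfl ?_
    rintro ⟨S, a, rfl⟩ -
    have hf : ({b | p b = ⟨{a, σ a}, a, rfl⟩} : Finset α) = {a, σ a} := by
      ext b
      simpa using hp a b
    rw [hf]
    by_cases h : σ a = a
    · simp [h]
    · rw [Finset.sum_pair (Ne.symm h), hσ]
      simp [h, Ne.symm h]
  rw [Finset.sum_add_distrib] at key
  simp only [Finset.sum_boole, Finset.sum_const, Finset.card_univ, smul_eq_mul, mul_one] at key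
  rw [Nat.card_eq_fintype_card (α := O), Nat.card_eq_fintype_card, Nat.card_eq_fintype_card,
    Fintype.card_subtype (fun a => σ a = a)]
  rw [Nat.cast_id] at key
  rw [mul_comm, ← key]

/-! ### Complex conjugation and twisting of characters -/

open scoped ComplexOrder Matrix in
/-- Weyl's unitary trick: the positive definite matrix `P = ∑ (A h)ᴴ (A h)` satisfies
`(A g)ᴴ P (A g) = P`, so `(A g)ᴴ` is conjugate to `A g⁻¹` and both have the same trace. -/
theorem conj_trace_eq {G : Type*} [Group G] [Fintype G] {n : Type*} [Fintype n] [DecidableEq n]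
    (A : G →* Matrix n n ℂ) (g : G) : (starRingEnd ℂ) (A g).trace = (A g⁻¹).trace := by
  classical
  set P : Matrix n n ℂ := ∑ h : G, (A h)ᴴ * A h with hP
  have hpos : P.PosDef := by
    rw [hP, ← Finset.add_sum_erase _ _ (Finset.mem_univ (1 : G))]
    refine Matrix.PosDef.add_posSemidef ?_ ?_
    · simpa using Matrix.PosDef.one
    · exact Matrix.posSemidef_sum _ fun h _ => Matrix.posSemidef_conjTranspose_mul_self _
  have hinv : (A g)ᴴ * P * A g = P := by
    rw [hP, Finset.mul_sum, Finset.sum_mul]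
    refine Fintype.sum_equiv (Equiv.mulRight g) _ _ fun h => ?_
    simp [Matrix.mul_assoc]
  have h1 : A g * A g⁻¹ = 1 := by rw [← map_mul]; simp
  have h2 : (A g)ᴴ * P = P * A g⁻¹ := by
    nth_rewrite 2 [← hinv]
    rw [Matrix.mul_assoc _ (A g), h1, Matrix.mul_one]
  have hu : IsUnit P.det := (Matrix.isUnit_iff_isUnit_det _).1 hpos.isUnit
  have h3 : (A g)ᴴ = P * A g⁻¹ * P⁻¹ := by
    rw [← h2, Matrix.mul_nonsing_inv_cancel_right _ _ hu]
  rw [starRingEnd_apply, ← Matrix.trace_conjTranspose, h3, Matrix.trace_mul_comm,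
    Matrix.nonsing_inv_mul_cancel_left _ _ hu]

theorem conj_character {G : Type} [Group G] [Fintype G] (V : FDRep ℂ G) (g : G) :
    (starRingEnd ℂ) (V.character g) = V.character g⁻¹ := by
  classical
  let b := Module.finBasis ℂ V
  let A : G →* Matrix _ _ ℂ :=
    (LinearMap.toMatrixAlgEquiv b).toAlgHom.toRingHom.toMonoidHom.comp V.ρ
  have h : ∀ x, V.character x = (A x).trace := fun x =>
    LinearMap.trace_eq_matrix_trace ℂ b (V.ρ x)
  rw [h, h, conj_trace_eq]

/-- If `χ` is irreducible then so is `χ̄ ⊗ ξ`, written here as `g ↦ χ(g⁻¹) ξ(g)`: it is afforded by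
the dual representation scaled by `ξ`, and its norm equals that of `χ`. -/
theorem isIrredChar_twist {G : Type} [Group G] [Fintype G] (ξ : G →* ℂˣ) {χ : G → ℂ}
    (hχ : IsIrredChar G χ) : IsIrredChar G fun g => χ g⁻¹ * (ξ g : ℂ) := by
  obtain ⟨V, hV, rfl⟩ := hχ
  let ρ : Representation ℂ G (Module.Dual ℂ V) :=
    { toFun := fun g => (ξ g : ℂ) • Representation.dual (show Representation ℂ G V from V.ρ) g
      map_one' := by rw [map_one, map_one, Units.val_one, one_smul]
      map_mul' := fun g h => by
        rw [map_mul, map_mul, Units.val_mul, smul_mul_smul_comm] }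
  have hc : ∀ g, (FDRep.of ρ).character g = V.character g⁻¹ * (ξ g : ℂ) := by
    intro g
    have h1 := FDRep.char_dual V g
    change LinearMap.trace ℂ (Module.Dual ℂ V) ((ξ g : ℂ) • _) = _
    rw [map_smul, smul_eq_mul, mul_comm]
    exact congrArg (· * (ξ g : ℂ)) h1
  refine ⟨FDRep.of ρ, ?_, funext fun g => (hc g).symm⟩
  rw [FDRep.simple_iff_char_is_norm_one] at hV ⊢
  rw [← hV]
  refine Finset.sum_congr rfl fun g _ => ?_
  rw [hc, hc, map_inv, inv_inv]
  have : (ξ g : ℂ) * ((ξ g)⁻¹ : ℂˣ) = 1 := by simp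
  linear_combination (V.character g * V.character g⁻¹) * this

/-! ### Completeness of the irreducible characters -/

/-- The representation of `G` underlying a `ℂ[G]`-module `M`. Unlike `Representation.ofModule`, it
lives on `M` itself with its given `ℂ`-structure. -/
noncomputable def moduleRep (G : Type) [Group G] (M : Type) [AddCommGroup M] [Module ℂ M]
    [Module (MonoidAlgebra ℂ G) M] [IsScalarTower ℂ (MonoidAlgebra ℂ G) M] :
    Representation ℂ G M :=
  ((Algebra.lsmul ℂ ℂ M : MonoidAlgebra ℂ G →ₐ[ℂ] Module.End ℂ M) :
    MonoidAlgebra ℂ G →* Module.End ℂ M).comp (MonoidAlgebra.of ℂ G)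

section GroupAlgebraModule

variable (G : Type) [Group G] (M : Type) [AddCommGroup M] [Module ℂ M]
    [Module (MonoidAlgebra ℂ G) M] [IsScalarTower ℂ (MonoidAlgebra ℂ G) M]

theorem moduleRep_apply (g : G) (m : M) : moduleRep G M g m = MonoidAlgebra.single g (1 : ℂ) • m :=
  rfl

variable [FiniteDimensional ℂ M] [IsSimpleModule (MonoidAlgebra ℂ G) M]

/-- Schur's lemma for a simple `ℂ[G]`-module. -/
theorem moduleRep_schur (f : M →ₗ[ℂ] M)
    (hf : ∀ (g : G) m, f (moduleRep G M g m) = moduleRep G M g (f m)) :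
    ∃ c : ℂ, f = c • LinearMap.id := by
  have hlin : ∀ (a : MonoidAlgebra ℂ G) (m : M), f (a • m) = a • f m := by
    intro a m
    induction a using MonoidAlgebra.induction_on with
    | of g => exact hf g m
    | add a b ha hb => rw [add_smul, map_add, ha, hb, add_smul]
    | smul r a ha => rw [smul_assoc, map_smul, ha, smul_assoc]
  let F : Module.End (MonoidAlgebra ℂ G) M := { f with map_smul' := hlin }
  obtain ⟨c, hc⟩ := (IsSimpleModule.algebraMap_end_bijective_of_isAlgClosed
    (A := MonoidAlgebra ℂ G) (V := M) ℂ).2 F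
  refine ⟨c, LinearMap.ext fun m => ?_⟩
  exact (congrArg (fun φ : Module.End (MonoidAlgebra ℂ G) M => φ m) hc).symm

variable [Fintype G]

/-- A simple `ℂ[G]`-module affords an irreducible character: by Schur's lemma its space of
self-intertwiners is one-dimensional, so its character has norm one. -/
theorem moduleRep_irred : IsIrredChar G (moduleRep G M).character := by
  refine ⟨FDRep.of (moduleRep G M), ?_, rfl⟩
  have : Invertible (Nat.card G : ℂ) := invertibleOfNonzero (NeZero.ne _)
  have hM : Nontrivial M := IsSimpleModule.nontrivial (MonoidAlgebra ℂ G) M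
  have h1 : Module.finrank ℂ
      (Representation.IntertwiningMap (moduleRep G M) (moduleRep G M)) = 1 := by
    refine finrank_eq_one (Representation.IntertwiningMap.id (moduleRep G M)) ?_ ?_
    · intro h
      obtain ⟨m, hm⟩ := exists_ne (0 : M)
      exact hm (congrArg (fun f : Representation.IntertwiningMap _ _ => f m) h)
    · intro f
      obtain ⟨c, hc⟩ := moduleRep_schur G M f.toLinearMap (Representation.IntertwiningMap.isIntertwining _ _ f)
      exact ⟨c, Representation.IntertwiningMap.ext hc.symm⟩
  have h2 := Representation.card_inv_mul_sum_char_mul_char_eq_finrank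
    (moduleRep G M) (moduleRep G M)
  rw [h1, Nat.cast_one, inv_mul_eq_one₀ (NeZero.ne _)] at h2
  rw [FDRep.simple_iff_char_is_norm_one]
  exact h2.symm

/-- If the class function `f` is orthogonal to all irreducible characters, the central element
`∑ f(g) g⁻¹` of `ℂ[G]` kills every simple module: it acts by a scalar, and its trace is a pairing
of `f` with an irreducible character. -/
theorem smul_eq_zero_of_orthogonal (f : G → ℂ) (hf : ∀ g h, f (h * g * h⁻¹) = f g)
    (hχ : ∀ χ, IsIrredChar G χ → ∑ g, f g * χ g⁻¹ = 0) (m : M) :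
    (∑ g, MonoidAlgebra.single g⁻¹ (f g)) • m = 0 := by
  set ρ := moduleRep G M
  let z : M →ₗ[ℂ] M := ∑ g, f g • ρ g⁻¹
  have hz : ∀ h : G, z * ρ h = ρ h * z := by
    intro h
    simp only [z, Finset.sum_mul, Finset.mul_sum]
    refine Fintype.sum_equiv (MulAut.conj h⁻¹).toEquiv _ _ fun g => ?_
    have h1 : f (MulAut.conj h⁻¹ g) = f g := hf g h⁻¹
    have h2 : h * (MulAut.conj h⁻¹ g)⁻¹ = g⁻¹ * h := by simp [mul_assoc]
    change f g • ρ g⁻¹ * ρ h = ρ h * f (MulAut.conj h⁻¹ g) • ρ (MulAut.conj h⁻¹ g)⁻¹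
    rw [smul_mul_assoc, mul_smul_comm, h1, ← map_mul, ← map_mul, h2]
  obtain ⟨c, hc⟩ := moduleRep_schur G M z fun h m => LinearMap.congr_fun (hz h) m
  have ht : LinearMap.trace ℂ M z = 0 := by
    rw [← hχ _ (moduleRep_irred G M)]
    simp [z, Representation.character, ρ]
  have hM : Nontrivial M := IsSimpleModule.nontrivial (MonoidAlgebra ℂ G) M
  have hc0 : c = 0 := by
    rw [hc, map_smul, LinearMap.trace_id, smul_eq_mul] at ht
    have : (Module.finrank ℂ M : ℂ) ≠ 0 := by exact_mod_cast Module.finrank_pos.ne'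
    simpa [this] using ht
  have hzm : z m = 0 := by rw [hc, hc0]; simp
  rw [← hzm, Finset.sum_smul]
  simp only [z, LinearMap.sum_apply, LinearMap.smul_apply]
  refine Finset.sum_congr rfl fun g _ => ?_
  rw [moduleRep_apply, ← smul_assoc, MonoidAlgebra.smul_single, smul_eq_mul, mul_one]

end GroupAlgebraModule

/-- A class function orthogonal to all irreducible characters vanishes: `∑ f(g) g⁻¹` kills the
regular module, which is a sum of simple submodules by Maschke's theorem. -/
theorem eq_zero_of_orthogonal (G : Type) [Group G] [Fintype G] (f : G → ℂ)
    (hf : ∀ g h, f (h * g * h⁻¹) = f g)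
    (hχ : ∀ χ, IsIrredChar G χ → ∑ g, f g * χ g⁻¹ = 0) : f = 0 := by
  classical
  have : NeZero (Nat.card G : ℂ) := inferInstance
  set z : MonoidAlgebra ℂ G := ∑ g, MonoidAlgebra.single g⁻¹ (f g) with hz
  have hfd : FiniteDimensional ℂ (MonoidAlgebra ℂ G) := inferInstance
  have hall : ∀ x ∈ (⊤ : Submodule (MonoidAlgebra ℂ G) (MonoidAlgebra ℂ G)), z * x = 0 := by
    intro x hx
    rw [← IsSemisimpleModule.sSup_simples_eq_top, sSup_eq_iSup'] at hx
    induction hx using Submodule.iSup_induction' with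
    | mem S x hx =>
      obtain ⟨S, hS⟩ := S
      have : IsSimpleModule (MonoidAlgebra ℂ G) S := hS
      have : FiniteDimensional ℂ S :=
        inferInstanceAs (FiniteDimensional ℂ (S.restrictScalars ℂ))
      exact congrArg Subtype.val (smul_eq_zero_of_orthogonal G S f hf hχ ⟨x, hx⟩)
    | zero => simp
    | add x y _ _ hx hy => rw [mul_add, hx, hy, add_zero]
  have hz0 : z = 0 := by simpa using hall 1 trivial
  funext g
  have := congrArg (fun a : MonoidAlgebra ℂ G => a.coeff g⁻¹) hz0
  simpa [hz, Finsupp.single_apply] using this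

/-! ### Irreducible characters as a basis of the class functions -/

theorem IsIrredChar.apply_conj {G : Type} [Group G] {χ : G → ℂ} (hχ : IsIrredChar G χ) (g h : G) :
    χ (h * g * h⁻¹) = χ g := by
  obtain ⟨V, -, rfl⟩ := hχ
  exact V.char_conj g h

theorem apply_out_mk {G : Type} [Group G] {f : G → ℂ} (hf : ∀ g h, f (h * g * h⁻¹) = f g) (g : G) :
    f (ConjClasses.mk g).out = f g := by
  have h : IsConj g (ConjClasses.mk g).out :=
    (ConjClasses.mk_eq_mk_iff_isConj.1 (Quotient.out_eq (ConjClasses.mk g))).symm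
  obtain ⟨c, hc⟩ := isConj_iff.1 h
  rw [← hc, hf]

theorem linearChar_conj {G : Type} [Group G] (ξ : G →* ℂˣ) (g h : G) :
    ((ξ (h * g * h⁻¹) : ℂˣ) : ℂ) = ξ g := by
  rw [map_mul, map_mul, map_inv, mul_comm (ξ h), mul_inv_cancel_right]

/-- The set of irreducible characters of `G`. -/
abbrev Irr (G : Type) [Group G] := {χ : G → ℂ // IsIrredChar G χ}

/-- An irreducible character as a function on conjugacy classes, evaluated at a chosen
representative of each class. -/
noncomputable def irrClassFun {G : Type} [Group G] (χ : Irr G) : ConjClasses G → ℂ :=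
  fun C => χ.1 C.out

theorem irrClassFun_mk {G : Type} [Group G] (χ : Irr G) (g : G) :
    irrClassFun χ (ConjClasses.mk g) = χ.1 g :=
  apply_out_mk χ.2.apply_conj g

/-- The map sending a class function `F` to its (unnormalized) pairings `∑ F(g) χ(g⁻¹)` with the
irreducible characters `χ`. -/
noncomputable def pairing {G : Type} [Group G] [Fintype G] :
    (ConjClasses G → ℂ) →ₗ[ℂ] (Irr G → ℂ) where
  toFun F χ := ∑ g, F (ConjClasses.mk g) * χ.1 g⁻¹
  map_add' F F' := by
    ext χ
    simp [add_mul, Finset.sum_add_distrib]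
  map_smul' c F := by
    ext χ
    simp [mul_assoc, Finset.mul_sum]

theorem pairing_injective {G : Type} [Group G] [Fintype G] :
    Function.Injective (pairing (G := G)) := by
  rw [← LinearMap.ker_eq_bot, LinearMap.ker_eq_bot']
  intro F hF
  have h := eq_zero_of_orthogonal G (fun g => F (ConjClasses.mk g))
    (fun g h => congrArg F (ConjClasses.mk_eq_mk_iff_isConj.2 (isConj_iff.2 ⟨h, rfl⟩).symm))
    (fun χ hχ => congrFun hF ⟨χ, hχ⟩)
  funext C
  obtain ⟨g, rfl⟩ := ConjClasses.mk_surjective C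
  exact congrFun h g

open scoped Classical in
/-- The first orthogonality relation. -/
theorem pairing_irrClassFun {G : Type} [Group G] [Fintype G] (χ ψ : Irr G) :
    pairing (irrClassFun χ) ψ = if χ = ψ then (Nat.card G : ℂ) else 0 := by
  have : Invertible (Nat.card G : ℂ) := invertibleOfNonzero (NeZero.ne _)
  have h0 : pairing (irrClassFun χ) ψ = ∑ g, χ.1 g * ψ.1 g⁻¹ := by
    simp [pairing, irrClassFun_mk]
  rw [h0]
  split_ifs with h
  · subst h
    obtain ⟨χ, V, hV, rfl⟩ := χ
    exact V.simple_iff_char_is_norm_one.1 hV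
  · obtain ⟨χ, V, hV, rfl⟩ := χ
    obtain ⟨ψ, W, hW, rfl⟩ := ψ
    have ho := FDRep.char_orthonormal V W
    rw [if_neg] at ho
    · exact (mul_eq_zero.1 ho).resolve_left (inv_ne_zero (NeZero.ne _))
    · rintro ⟨i⟩
      exact h (Subtype.ext (FDRep.char_iso i))

theorem irrClassFun_linearIndependent {G : Type} [Group G] [Fintype G] :
    LinearIndependent ℂ (irrClassFun (G := G)) := by
  classical
  rw [linearIndependent_iff']
  intro s c hc χ hχ
  have h := congrFun (congrArg pairing hc) χ
  rw [map_sum, Finset.sum_apply, map_zero] at h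
  simp only [map_smul, Pi.smul_apply, pairing_irrClassFun, smul_eq_mul, Pi.zero_apply, mul_ite,
    mul_zero, Finset.sum_ite_eq', hχ, if_true] at h
  exact (mul_eq_zero.1 h).resolve_right (NeZero.ne _)

instance {G : Type} [Group G] [Fintype G] : Finite (Irr G) :=
  irrClassFun_linearIndependent.finite

/-- Linear independence bounds the number of irreducible characters above by the number of classes,
and completeness (injectivity of `pairing`) bounds it below. -/
theorem card_irr {G : Type} [Group G] [Fintype G] :
    Nat.card (Irr G) = Nat.card (ConjClasses G) := by
  classical
  have := Fintype.ofFinite (Irr G)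
  have := Fintype.ofFinite (ConjClasses G)
  apply le_antisymm
  · simpa using irrClassFun_linearIndependent (G := G).fintype_card_le_finrank
  · simpa using LinearMap.finrank_le_finrank_of_injective (pairing_injective (G := G))

/-! ### The trace of the twisting operator -/

/-- The map `χ ↦ χ̄ ⊗ ξ` on irreducible characters, with `χ̄(g)` written as `χ(g⁻¹)`. -/
def twist {G : Type} [Group G] [Fintype G] (ξ : G →* ℂˣ) (χ : Irr G) : Irr G :=
  ⟨fun g => χ.1 g⁻¹ * (ξ g : ℂ), isIrredChar_twist ξ χ.2⟩

theorem inv'_mk {G : Type} [Group G] (g : G) :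
    ConjClasses.inv' (ConjClasses.mk g) = ConjClasses.mk g⁻¹ := rfl

/-- The operator `F ↦ (C ↦ F(C⁻¹) ξ(C))` on class functions, extending `twist ξ`. -/
noncomputable def twistMap {G : Type} [Group G] (ξ : G →* ℂˣ) :
    (ConjClasses G → ℂ) →ₗ[ℂ] (ConjClasses G → ℂ) where
  toFun F C := F (ConjClasses.inv' C) * (ξ C.out : ℂ)
  map_add' F F' := by
    ext C
    simp [add_mul]
  map_smul' c F := by
    ext C
    simp [mul_assoc]

theorem twistMap_irrClassFun {G : Type} [Group G] [Fintype G] (ξ : G →* ℂˣ) (χ : Irr G) :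
    twistMap ξ (irrClassFun χ) = irrClassFun (twist ξ χ) := by
  funext C
  obtain ⟨g, rfl⟩ := ConjClasses.mk_surjective C
  change irrClassFun χ (ConjClasses.mk g⁻¹) * (ξ (ConjClasses.mk g).out : ℂ) = _
  rw [irrClassFun_mk, irrClassFun_mk, apply_out_mk (f := fun g => (ξ g : ℂ)) (linearChar_conj ξ)]
  rfl

/-- In the basis of irreducible characters `twistMap ξ` is a permutation matrix, so its trace counts
the fixed points of `twist ξ`. -/
theorem trace_twistMap_irr {G : Type} [Group G] [Fintype G] (ξ : G →* ℂˣ) :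
    LinearMap.trace ℂ _ (twistMap ξ) = (Nat.card {χ : Irr G // twist ξ χ = χ} : ℂ) := by
  classical
  have := Fintype.ofFinite (Irr G)
  have := Fintype.ofFinite (ConjClasses G)
  let b : Module.Basis (Irr G) ℂ (ConjClasses G → ℂ) :=
    basisOfLinearIndependentOfCardEqFinrank' irrClassFun irrClassFun_linearIndependent (by
      simpa using card_irr (G := G))
  have hb : ∀ χ, b χ = irrClassFun χ := fun χ => by simp [b]
  rw [LinearMap.trace_eq_matrix_trace ℂ b, Matrix.trace]
  simp only [Matrix.diag_apply, LinearMap.toMatrix_apply, hb, twistMap_irrClassFun]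
  simp only [← hb, Module.Basis.repr_self, Finsupp.single_apply, Finset.sum_boole]
  rw [Nat.card_eq_fintype_card, Fintype.card_subtype]

/-- In the basis of indicator functions of classes the diagonal entry of `twistMap ξ` at `C` is
`ξ(C) = ±1` if `C` is real, and `0` otherwise. -/
theorem trace_twistMap_conj {G : Type} [Group G] [Fintype G] (ξ : G →* ℂˣ) :
    LinearMap.trace ℂ _ (twistMap ξ) =
      (Nat.card {C : ConjClasses G // ConjClasses.inv' C = C} : ℂ) - 2 * numXi G ξ := by
  classical
  have := Fintype.ofFinite (ConjClasses G)
  rw [LinearMap.trace_eq_matrix_trace ℂ (Pi.basisFun ℂ (ConjClasses G)), Matrix.trace]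
  have hentry : ∀ C : ConjClasses G,
      LinearMap.toMatrix (Pi.basisFun ℂ _) (Pi.basisFun ℂ _) (twistMap ξ) C C =
      (if ConjClasses.inv' C = C then 1 else 0) - 2 * (if ConjClasses.inv' C = C ∧
        ∀ g : G, ConjClasses.mk g = C → (ξ g : ℂ) = -1 then 1 else 0) := by
    intro C
    obtain ⟨g, rfl⟩ := ConjClasses.mk_surjective C
    have hξ : ∀ h, ConjClasses.mk h = ConjClasses.mk g → (ξ h : ℂ) = ξ g := by
      intro h hh
      rw [← apply_out_mk (f := fun g => (ξ g : ℂ)) (linearChar_conj ξ) g, ← hh,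
        apply_out_mk (f := fun g => (ξ g : ℂ)) (linearChar_conj ξ)]
    have hiff : (∀ h : G, ConjClasses.mk h = ConjClasses.mk g → (ξ h : ℂ) = -1) ↔
        (ξ g : ℂ) = -1 :=
      ⟨fun h => h g rfl, fun h x hx => (hξ x hx).trans h⟩
    have hval : LinearMap.toMatrix (Pi.basisFun ℂ _) (Pi.basisFun ℂ _) (twistMap ξ)
        (ConjClasses.mk g) (ConjClasses.mk g) =
        (if ConjClasses.inv' (ConjClasses.mk g) = ConjClasses.mk g then 1 else 0) * (ξ g : ℂ) := by
      rw [LinearMap.toMatrix_apply, Pi.basisFun_repr, Pi.basisFun_apply]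
      change (Pi.single (ConjClasses.mk g) 1 : ConjClasses G → ℂ) _ * _ = _
      rw [Pi.single_apply, apply_out_mk (f := fun g => (ξ g : ℂ)) (linearChar_conj ξ)]
    simp only [hval, hiff]
    by_cases hr : ConjClasses.inv' (ConjClasses.mk g) = ConjClasses.mk g
    -- on a real class `ξ(g) = ξ(g⁻¹)`, so `ξ(g)` is a square root of `1`
    · have h1 : (ξ g : ℂ) * ξ g = 1 := by
        nth_rewrite 1 [← hξ g⁻¹ hr]
        rw [← Units.val_mul, ← map_mul]
        simp
      rcases mul_self_eq_one_iff.1 h1 with h | h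
      · have : ¬ (1 : ℂ) = -1 := by norm_num
        simp [hr, h, this]
      · simp only [hr, h, and_self, if_true]
        norm_num
    · simp [hr]
  simp only [Matrix.diag_apply, hentry]
  rw [Finset.sum_sub_distrib, ← Finset.mul_sum, Finset.sum_boole, Finset.sum_boole, numXi,
    Nat.card_eq_fintype_card, Nat.card_eq_fintype_card, Fintype.card_subtype, Fintype.card_subtype]

/-- For a finite group `G` and a linear character `ξ` of `G`,
`2·#{χ irreducible : χ = χ̄⊗ξ} + #{χ irreducible : χ ≠ χ̄⊗ξ} = 2·|G_{**}| − 2·n_ξ`. -/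
theorem count_twisted_selfdual_characters (G : Type) [Group G] [Fintype G] (ξ : G →* ℂˣ) :
    (2 * Nat.card {χ : G → ℂ // IsIrredChar G χ ∧
        ∀ g : G, χ g = (starRingEnd ℂ) (χ g) * (ξ g : ℂ)}
      + Nat.card {χ : G → ℂ // IsIrredChar G χ ∧
        ¬ ∀ g : G, χ g = (starRingEnd ℂ) (χ g) * (ξ g : ℂ)} : ℤ)
      = 2 * numStarStar G - 2 * numXi G ξ := by
  classical
  have hiff : ∀ χ : Irr G, (∀ g : G, χ.1 g = (starRingEnd ℂ) (χ.1 g) * (ξ g : ℂ)) ↔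
      twist ξ χ = χ := by
    rintro ⟨χ, V, hV, rfl⟩
    refine Iff.trans ?_ (Subtype.ext_iff.trans funext_iff).symm
    refine forall_congr' fun g => ?_
    change V.character g = (starRingEnd ℂ) (V.character g) * (ξ g : ℂ) ↔
      V.character g⁻¹ * (ξ g : ℂ) = V.character g
    rw [conj_character]
    exact eq_comm
  have h1 : Nat.card {χ : G → ℂ // IsIrredChar G χ ∧
      ∀ g : G, χ g = (starRingEnd ℂ) (χ g) * (ξ g : ℂ)} =
      Nat.card {χ : Irr G // twist ξ χ = χ} :=
    Nat.card_congr ((Equiv.subtypeSubtypeEquivSubtypeInter _ _).symm.trans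
      (Equiv.subtypeEquivRight hiff))
  have h2 : Nat.card {χ : G → ℂ // IsIrredChar G χ ∧
      ¬ ∀ g : G, χ g = (starRingEnd ℂ) (χ g) * (ξ g : ℂ)} =
      Nat.card {χ : Irr G // ¬ twist ξ χ = χ} :=
    Nat.card_congr ((Equiv.subtypeSubtypeEquivSubtypeInter _
      (fun χ : G → ℂ => ¬ ∀ g : G, χ g = (starRingEnd ℂ) (χ g) * (ξ g : ℂ))).symm.trans
      (Equiv.subtypeEquivRight fun χ => not_congr (hiff χ)))
  have h3 : Nat.card {χ : Irr G // twist ξ χ = χ} + Nat.card {χ : Irr G // ¬ twist ξ χ = χ} =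
      Nat.card (ConjClasses G) := by
    rw [← card_irr, ← Nat.card_sum]
    exact Nat.card_congr (Equiv.sumCompl _)
  have h4 : (Nat.card {χ : Irr G // twist ξ χ = χ} : ℤ) =
      Nat.card {C : ConjClasses G // ConjClasses.inv' C = C} - 2 * numXi G ξ := by
    have := (trace_twistMap_irr ξ).symm.trans (trace_twistMap_conj ξ)
    exact_mod_cast this
  have h5 : 2 * numStarStar G = Nat.card (ConjClasses G) +
      Nat.card {C : ConjClasses G // ConjClasses.inv' C = C} :=
    two_mul_card_pairs ConjClasses.inv' fun C => by
      obtain ⟨g, rfl⟩ := ConjClasses.mk_surjective C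
      rw [inv'_mk, inv'_mk, inv_inv]
  rw [h1, h2]
  omega
end

section
/- Let G be a finite group and ξ a linear character of G. Then #{real conjugacy classes of G} = #{irreducible characters χ of G with χ = χ̄⊗ξ} + 2·n_ξ, where n_ξ = #{real conjugacy classes C of G with ξ(C) = −1}. -/
/-!
The operator `T f (C) = f(C⁻¹) ξ(C)` on class functions is computed in two bases. It sends each
irreducible character `χ` to the irreducible character `χ̄ ⊗ ξ`, so in the basis of irreducible
characters its trace is the number of `χ` with `χ = χ̄ ⊗ ξ` (`trace_twistOp_irr`). In the basis of
class indicators its trace is `∑ ξ(C)` over the real classes `C`; there `ξ(C) = ±1`, so the sum is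
the number of real classes minus `2 n_ξ` (`trace_twistOp_classes`).

That the irreducible characters form a basis (`IrrClassFun.basis`) rests on their orthonormality
and on completeness (`class_fun_eq_zero`), the latter from Schur's lemma and semisimplicity of
`ℂ[G]`. The identity `χ(g⁻¹) = conj χ(g)` comes from an invariant Hermitian form
(`trace_inv_eq_star_trace`).
-/


open scoped BigOperators

open Module

/-! ### Characters at inverses -/

open scoped ComplexOrder in
/-- Unitary trick: `P = ∑ R(h)ᴴ R(h)` is positive definite and `R(g)ᴴ P = P R(g⁻¹)`, so `R(g⁻¹)` is
similar to `R(g)ᴴ`. -/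
theorem trace_inv_eq_star_trace {n : Type*} [Fintype n] [DecidableEq n] {G : Type*} [Group G]
    [Fintype G] (R : G →* Matrix n n ℂ) (g : G) : (R g⁻¹).trace = star (R g).trace := by
  set P : Matrix n n ℂ := ∑ h, (R h).conjTranspose * R h with hP
  have hpd : P.PosDef := by
    refine Matrix.posDef_sum Finset.univ_nonempty fun h _ => ?_
    refine Matrix.PosDef.conjTranspose_mul_self _ (Function.LeftInverse.injective
      (g := (R h⁻¹).mulVec) fun v => ?_)
    rw [Matrix.mulVec_mulVec, ← map_mul]; simp
  have hcomm : (R g).conjTranspose * P = P * R g⁻¹ := by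
    have h1 : (R g).conjTranspose * P * R g = P := by
      rw [hP, Finset.mul_sum, Finset.sum_mul]
      refine Fintype.sum_equiv (Equiv.mulRight g) _ _ fun h => ?_
      simp [Matrix.conjTranspose_mul, Matrix.mul_assoc]
    calc _ = (R g).conjTranspose * P * (R g * R g⁻¹) := by rw [← map_mul]; simp
      _ = _ := by rw [← Matrix.mul_assoc, h1]
  have hu : IsUnit P.det := by simpa using hpd.det_pos.ne'
  calc (R g⁻¹).trace = (P⁻¹ * (P * R g⁻¹)).trace := by
        rw [Matrix.nonsing_inv_mul_cancel_left _ _ hu]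
    _ = (R g).conjTranspose.trace := by
        rw [← hcomm, Matrix.trace_mul_comm, Matrix.mul_nonsing_inv_cancel_right _ _ hu]
    _ = _ := Matrix.trace_conjTranspose _

theorem Representation.character_inv_eq_star {G V : Type*} [Group G] [Fintype G] [AddCommGroup V]
    [Module ℂ V] [FiniteDimensional ℂ V] (ρ : Representation ℂ G V) (g : G) :
    ρ.character g⁻¹ = star (ρ.character g) := by
  let b := Module.finBasis ℂ V
  let R : G →* Matrix (Fin (finrank ℂ V)) (Fin (finrank ℂ V)) ℂ :=
    (LinearMap.toMatrixAlgEquiv b : (V →ₗ[ℂ] V) ≃ₐ[ℂ] _).toMulEquiv.toMonoidHom.comp ρ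
  have h (x : G) : ρ.character x = (R x).trace := LinearMap.trace_eq_matrix_trace ℂ b _
  rw [h, h, trace_inv_eq_star_trace]

/-! ### Completeness of the irreducible characters -/

theorem Representation.isIrredChar_of_isIrreducible {G V : Type} [Group G] [Fintype G]
    [AddCommGroup V] [Module ℂ V] [FiniteDimensional ℂ V] (ρ : Representation ℂ G V)
    [ρ.IsIrreducible] : IsIrredChar G ρ.character := by
  refine ⟨FDRep.of ρ, ?_, rfl⟩
  rw [FDRep.simple_iff_char_is_norm_one]
  have := invertibleOfNonzero (NeZero.ne (Nat.card G : ℂ))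
  have h := ρ.char_orthonormal ρ
  rw [if_pos ⟨Representation.Equiv.refl ρ⟩, inv_mul_eq_one₀ (NeZero.ne _)] at h
  exact h.symm

/-- By Schur's lemma `∑ f(g) ρ(g)` is a scalar for a class function `f`; its trace determines it. -/
theorem Representation.sum_smul_eq_zero {G V : Type*} [Group G] [Fintype G]
    [AddCommGroup V] [Module ℂ V] [FiniteDimensional ℂ V] (ρ : Representation ℂ G V)
    [ρ.IsIrreducible] (f : G → ℂ) (hf : ∀ g h, f (h * g * h⁻¹) = f g)
    (h0 : ∑ g, f g * ρ.character g = 0) : ∑ g, f g • ρ g = 0 := by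
  let Φ : ρ.IntertwiningMap ρ := ⟨∑ g, f g • ρ g, fun h => by
    have hconj (g : G) : ρ h * ρ g = ρ (h * g * h⁻¹) * ρ h := by rw [← map_mul, ← map_mul]; simp
    change (∑ g, f g • ρ g) * ρ h = ρ h * ∑ g, f g • ρ g
    rw [Finset.mul_sum, Finset.sum_mul]
    symm
    refine Fintype.sum_equiv (MulAut.conj h).toEquiv _ _ fun g => ?_
    change ρ h * f g • ρ g = f (h * g * h⁻¹) • ρ (h * g * h⁻¹) * ρ h
    rw [hf, mul_smul_comm, smul_mul_assoc, hconj]⟩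
  obtain ⟨c, hc⟩ :=
    (Representation.IsIrreducible.algebraMap_intertwiningMap_bijective_of_isAlgClosed
      (ρ := ρ)).2 Φ
  have hc' : ∑ g, f g • ρ g = c • (1 : Module.End ℂ V) := by
    change Φ.toLinearMap = _
    rw [← hc]
    rfl
  have ht : LinearMap.trace ℂ V (∑ g, f g • ρ g) = 0 := by
    rw [← h0]; simp [Representation.character]
  rw [hc'] at ht ⊢
  rw [map_smul, LinearMap.trace_one, smul_eq_zero] at ht
  rcases ht with h | h
  · simp [h]
  · have : Subsingleton V := by
      rw [Nat.cast_eq_zero] at h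
      exact Module.finrank_zero_iff.1 h
    exact Subsingleton.elim _ _

open scoped MonoidAlgebra in
theorem Representation.asAlgebraHom_ofModule' {G M : Type*} [Group G] [AddCommGroup M]
    [Module ℂ M] [Module ℂ[G] M] [IsScalarTower ℂ ℂ[G] M] (r : ℂ[G]) (m : M) :
    (Representation.ofModule' (k := ℂ) (G := G) M).asAlgebraHom r m = r • m := by
  rw [Representation.asAlgebraHom_def, Representation.ofModule']
  exact LinearMap.congr_fun (AlgHom.congr_fun
    ((MonoidAlgebra.lift ℂ (M →ₗ[ℂ] M) G).apply_symm_apply (Algebra.lsmul ℂ ℂ M)) r) m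

open scoped MonoidAlgebra in
theorem Representation.isIrreducible_ofModule' {G M : Type*} [Group G] [AddCommGroup M]
    [Module ℂ M] [Module ℂ[G] M] [IsScalarTower ℂ ℂ[G] M] [IsSimpleModule ℂ[G] M] :
    (Representation.ofModule' (k := ℂ) (G := G) M).IsIrreducible := by
  rw [Representation.irreducible_iff_isSimpleModule_asModule]
  let ρ := Representation.ofModule' (k := ℂ) (G := G) M
  let e : ρ.asModule ≃ₗ[ℂ[G]] M :=
    { ρ.asModuleEquiv.toAddEquiv with
      map_smul' := fun r x => (ρ.asModuleEquiv_map_smul r x).trans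
        (Representation.asAlgebraHom_ofModule' r _) }
  exact IsSimpleModule.congr e

open scoped MonoidAlgebra in
/-- A class function orthogonal to every irreducible character vanishes: the central element
`z = ∑ f(g) g` kills every simple submodule of the semisimple module `ℂ[G]`, hence kills `1`. -/
theorem class_fun_eq_zero {G : Type} [Group G] [Fintype G]
    (f : G → ℂ) (hf : ∀ g h, f (h * g * h⁻¹) = f g)
    (h0 : ∀ χ, IsIrredChar G χ → ∑ g, f g * χ g = 0) : f = 0 := by
  let z : ℂ[G] := ∑ g, MonoidAlgebra.single g (f g)
  have key : ∀ S : Submodule ℂ[G] ℂ[G], IsSimpleModule ℂ[G] S → ∀ s ∈ S, z * s = 0 := by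
    intro S hS s hs
    let ρ := Representation.ofModule' (k := ℂ) (G := G) S
    have : ρ.IsIrreducible := Representation.isIrreducible_ofModule'
    have : FiniteDimensional ℂ ℂ[G] := inferInstance
    have : FiniteDimensional ℂ S :=
      inferInstanceAs (FiniteDimensional ℂ (S.restrictScalars ℂ))
    have h1 := ρ.sum_smul_eq_zero f hf (h0 _ ρ.isIrredChar_of_isIrreducible)
    have h2 : ρ.asAlgebraHom z = 0 := by
      rw [← h1]; simp [z, Representation.asAlgebraHom_single]
    have h3 := Representation.asAlgebraHom_ofModule' z (⟨s, hs⟩ : S)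
    exact congrArg Subtype.val (h3.symm.trans (LinearMap.congr_fun h2 _))
  have hz : z * 1 = 0 := by
    have htop : (1 : ℂ[G]) ∈ sSup {S : Submodule ℂ[G] ℂ[G] | IsSimpleModule ℂ[G] S} := by
      rw [IsSemisimpleModule.sSup_simples_eq_top]; trivial
    rw [sSup_eq_iSup'] at htop
    refine Submodule.iSup_induction _ (motive := fun s => z * s = 0) htop
      (fun S s hs => key S.1 S.2 s hs) (mul_zero z) fun a b ha hb => by
        rw [mul_add, ha, hb, add_zero]
  classical
  ext g
  have : z.coeff g = 0 := by rw [← mul_one z, hz]; rfl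
  simpa [z, Finsupp.single_apply] using this

/-! ### Irreducible characters as a basis of class functions -/

theorem IsIrredChar.apply_inv {G : Type} [Group G] [Fintype G] {χ : G → ℂ}
    (h : IsIrredChar G χ) (g : G) : χ g⁻¹ = star (χ g) := by
  obtain ⟨V, -, rfl⟩ := h
  exact Representation.character_inv_eq_star V.ρ g

theorem IsIrredChar.eq_of_isConj {G : Type} [Group G] {χ : G → ℂ} (hχ : IsIrredChar G χ)
    (g h : G) (hgh : IsConj g h) : χ g = χ h := by
  obtain ⟨V, -, rfl⟩ := hχ
  obtain ⟨x, rfl⟩ := isConj_iff.1 hgh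
  exact (FDRep.char_conj V g x).symm

/-- First orthogonality relation, with irreducible characters compared as functions. -/
theorem IsIrredChar.sum_mul_inv {G : Type} [Group G] [Fintype G] {χ ψ : G → ℂ}
    (hχ : IsIrredChar G χ) (hψ : IsIrredChar G ψ) [Decidable (χ = ψ)] :
    (Nat.card G : ℂ)⁻¹ * ∑ g, χ g * ψ g⁻¹ = if χ = ψ then 1 else 0 := by
  obtain ⟨V, hV, rfl⟩ := hχ
  obtain ⟨W, hW, rfl⟩ := hψ
  have := invertibleOfNonzero (NeZero.ne (Nat.card G : ℂ))
  split_ifs with h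
  · rw [← h, FDRep.char_orthonormal, if_pos ⟨CategoryTheory.Iso.refl V⟩]
  · rw [FDRep.char_orthonormal, if_neg]
    rintro ⟨i⟩
    exact h (FDRep.char_iso i)

/-- `χ̄ ⊗ ξ` is irreducible: it is the character of `V* ⊗ ξ` and has the same norm as `χ`. -/
theorem IsIrredChar.twist {G : Type} [Group G] [Fintype G] {χ : G → ℂ}
    (h : IsIrredChar G χ) (ξ : G →* ℂˣ) : IsIrredChar G fun g => χ g⁻¹ * (ξ g : ℂ) := by
  obtain ⟨V, hV, rfl⟩ := h
  let σ : Representation ℂ G (Module.Dual ℂ V) :=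
    { toFun := fun g => (ξ g : ℂ) • Representation.dual V.ρ g
      map_one' := by rw [map_one, map_one, Units.val_one, one_smul]
      map_mul' := fun g h => by
        rw [map_mul, map_mul, smul_mul_smul_comm, Units.val_mul] }
  have hσ (g : G) : (FDRep.of σ).character g = V.character g⁻¹ * (ξ g : ℂ) := by
    change LinearMap.trace ℂ _ ((ξ g : ℂ) • Representation.dual V.ρ g) = _
    rw [map_smul, smul_eq_mul, mul_comm]
    exact congrArg (· * (ξ g : ℂ)) (Representation.char_dual V.ρ g)
  refine ⟨FDRep.of σ, ?_, funext fun g => (hσ g).symm⟩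
  rw [FDRep.simple_iff_char_is_norm_one] at hV ⊢
  rw [← hV]
  refine Finset.sum_congr rfl fun g _ => ?_
  have hu : (ξ g : ℂ) * (ξ g⁻¹ : ℂ) = 1 := by rw [← Units.val_mul, ← map_mul]; simp
  rw [hσ, hσ, inv_inv]
  linear_combination V.character g * V.character g⁻¹ * hu

/-- The irreducible characters of `G`, viewed as functions on the set of conjugacy classes. -/
abbrev IrrClassFun (G : Type) [Group G] : Type :=
  {φ : ConjClasses G → ℂ // IsIrredChar G fun g => φ (ConjClasses.mk g)}

theorem IrrClassFun.linearIndependent (G : Type) [Group G] [Fintype G] :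
    LinearIndependent ℂ fun φ : IrrClassFun G => φ.1 := by
  classical
  have hne {φ ψ : IrrClassFun G} (h : (fun g => φ.1 (ConjClasses.mk g)) =
      fun g => ψ.1 (ConjClasses.mk g)) : φ = ψ :=
    Subtype.ext (ConjClasses.mk_surjective.injective_comp_right h)
  let L (ψ : IrrClassFun G) : Module.Dual ℂ (ConjClasses G → ℂ) :=
    (Nat.card G : ℂ)⁻¹ • ∑ g : G, (ψ.1 (ConjClasses.mk g⁻¹)) • LinearMap.proj (ConjClasses.mk g)
  have hL (ψ φ : IrrClassFun G) : L ψ φ.1 = if (fun g => φ.1 (ConjClasses.mk g)) =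
      (fun g => ψ.1 (ConjClasses.mk g)) then 1 else 0 := by
    rw [← IsIrredChar.sum_mul_inv φ.2 ψ.2]
    simp [L, mul_comm]
  refine LinearIndependent.of_pairwise_dual_eq_zero_one _ L (fun ψ φ h => ?_) fun φ => ?_
  · change L ψ φ.1 = 0
    rw [hL, if_neg fun h' => h (hne h').symm]
  · rw [hL, if_pos rfl]

/-- A linear form `ℓ` vanishing on all irreducible characters is the pairing with the class function
`g ↦ ℓ(1_C) / |C|`, `C` the class of `g`, which is zero by `class_fun_eq_zero`. -/
theorem IrrClassFun.span_eq_top (G : Type) [Group G] [Fintype G] :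
    Submodule.span ℂ (Set.range fun φ : IrrClassFun G => φ.1) = ⊤ := by
  classical
  by_contra hne
  obtain ⟨ℓ, hℓ, hmap⟩ := Submodule.exists_dual_map_eq_bot_of_lt_top
    (lt_top_iff_ne_top.2 hne) inferInstance
  have hℓ0 (φ : IrrClassFun G) : ℓ φ.1 = 0 := by
    rw [← Submodule.mem_bot ℂ, ← hmap]
    exact Submodule.mem_map_of_mem (Submodule.subset_span ⟨φ, rfl⟩)
  let c (C : ConjClasses G) : ℂ := (Finset.univ.filter fun g : G => ConjClasses.mk g = C).card
  have hc (C : ConjClasses G) : c C ≠ 0 := by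
    obtain ⟨g, rfl⟩ := ConjClasses.mk_surjective C
    exact Nat.cast_ne_zero.2 (Finset.card_ne_zero_of_mem (a := g) (by simp))
  let a (C : ConjClasses G) : ℂ := ℓ (Pi.single C 1)
  have hℓsum (φ : ConjClasses G → ℂ) :
      ∑ g : G, a (ConjClasses.mk g) / c (ConjClasses.mk g) * φ (ConjClasses.mk g) = ℓ φ := by
    rw [← Finset.sum_fiberwise Finset.univ (fun g : G => ConjClasses.mk g)]
    rw [LinearMap.pi_apply_eq_sum_univ ℓ φ]
    refine Finset.sum_congr rfl fun C _ => ?_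
    rw [Finset.sum_congr rfl (g := fun _ => a C / c C * φ C)
      fun g hg => by rw [(Finset.mem_filter.1 hg).2]]
    rw [Finset.sum_const, nsmul_eq_mul]
    change c C * _ = _
    have h1 : (fun j => if C = j then (1 : ℂ) else 0) = Pi.single C 1 := by
      ext j; simp [Pi.single_apply, eq_comm]
    rw [h1, smul_eq_mul]
    change _ = φ C * a C
    field_simp [hc C]
  have hzero := class_fun_eq_zero (fun g : G => a (ConjClasses.mk g) / c (ConjClasses.mk g))
    (fun g h => by
      have : ConjClasses.mk (h * g * h⁻¹) = ConjClasses.mk g :=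
        ConjClasses.mk_eq_mk_iff_isConj.2 (isConj_iff.2 ⟨h, rfl⟩).symm
      simp only [this])
    (fun χ hχ => by
      let φ : IrrClassFun G := ⟨Quotient.lift χ hχ.eq_of_isConj, hχ⟩
      exact (hℓsum φ.1).trans (hℓ0 φ))
  refine hℓ (LinearMap.ext fun φ => ?_)
  rw [← hℓsum, LinearMap.zero_apply]
  refine Finset.sum_eq_zero fun g _ => ?_
  rw [show a (ConjClasses.mk g) / c (ConjClasses.mk g) = 0 from congrFun hzero g, zero_mul]

/-- The irreducible characters form a basis of the space of class functions. -/
noncomputable def IrrClassFun.basis (G : Type) [Group G] [Fintype G] :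
    Basis (IrrClassFun G) ℂ (ConjClasses G → ℂ) :=
  Basis.mk (IrrClassFun.linearIndependent G) (IrrClassFun.span_eq_top G).ge

/-! ### The twisting operator and its trace -/

/-- The value of a linear character on a conjugacy class. -/
def MonoidHom.onClass {G : Type} [Group G] (ξ : G →* ℂˣ) : ConjClasses G → ℂ :=
  Quotient.lift (fun g => (ξ g : ℂ)) fun g h hgh => by
    obtain ⟨x, rfl⟩ := isConj_iff.1 hgh
    simp

/-- The operator `f ↦ (C ↦ f(C⁻¹) ξ(C))` on class functions; on characters it is `χ ↦ χ̄ ⊗ ξ`. -/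
noncomputable def twistOp {G : Type} [Group G] (ξ : G →* ℂˣ) :
    (ConjClasses G → ℂ) →ₗ[ℂ] (ConjClasses G → ℂ) where
  toFun f C := f C.inv' * ξ.onClass C
  map_add' f g := by ext C; simp [add_mul]
  map_smul' r f := by ext C; simp [mul_assoc]

/-- `twistOp ξ` sends basis characters to basis characters, so its trace counts the fixed ones. -/
theorem trace_twistOp_irr {G : Type} [Group G] [Fintype G] (ξ : G →* ℂˣ) :
    LinearMap.trace ℂ _ (twistOp ξ) =
      Nat.card {φ : IrrClassFun G // twistOp ξ φ.1 = φ.1} := by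
  classical
  let b := IrrClassFun.basis G
  have hb (φ : IrrClassFun G) : b φ = φ.1 := by simp [b, IrrClassFun.basis]
  have : Fintype (IrrClassFun G) := FiniteDimensional.fintypeBasisIndex b
  rw [LinearMap.trace_eq_matrix_trace ℂ b, Matrix.trace, Nat.card_eq_fintype_card,
    Fintype.card_subtype, Finset.card_filter, Nat.cast_sum]
  refine Finset.sum_congr rfl fun φ _ => ?_
  let ψ : IrrClassFun G := ⟨twistOp ξ φ.1, φ.2.twist ξ⟩
  have hψ : twistOp ξ (b φ) = b ψ := by rw [hb, hb]
  have hiff : twistOp ξ φ.1 = φ.1 ↔ ψ = φ := (Subtype.ext_iff (a1 := ψ) (a2 := φ)).symm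
  rw [Matrix.diag_apply, LinearMap.toMatrix_apply, hψ, b.repr_self, Finsupp.single_apply]
  simp [hiff]

/-- In the basis of indicator functions the trace is `∑ ξ(C)` over real classes `C`, where
`ξ(C) = ±1` because `ξ(C) = ξ(C⁻¹) = ξ(C)⁻¹`. -/
theorem trace_twistOp_classes {G : Type} [Group G] [Fintype G] (ξ : G →* ℂˣ) :
    LinearMap.trace ℂ _ (twistOp ξ) + 2 * (numXi G ξ : ℂ) =
      Nat.card {C : ConjClasses G // ConjClasses.inv' C = C} := by
  classical
  rw [LinearMap.trace_eq_matrix_trace ℂ (Pi.basisFun ℂ (ConjClasses G)), Matrix.trace, numXi,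
    Nat.card_eq_fintype_card, Nat.card_eq_fintype_card,
    Fintype.card_subtype, Finset.card_filter, Nat.cast_sum,
    Fintype.card_subtype, Finset.card_filter, Nat.cast_sum, Finset.mul_sum,
    ← Finset.sum_add_distrib]
  refine Finset.sum_congr rfl fun C _ => ?_
  have hneg : (∀ g : G, ConjClasses.mk g = C → (ξ g : ℂ) = -1) ↔ ξ.onClass C = -1 := by
    constructor
    · intro h
      obtain ⟨g, rfl⟩ := ConjClasses.mk_surjective C
      exact h g rfl
    · rintro h g rfl
      exact h
  have hsq : C.inv' = C → ξ.onClass C = 1 ∨ ξ.onClass C = -1 := by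
    intro hC
    rw [← mul_self_eq_one_iff]
    nth_rw 1 [← hC]
    obtain ⟨g, rfl⟩ := ConjClasses.mk_surjective C
    change (ξ g⁻¹ : ℂ) * (ξ g : ℂ) = 1
    rw [← Units.val_mul, ← map_mul]; simp
  rw [Matrix.diag_apply, LinearMap.toMatrix_apply]
  simp only [hneg, Pi.basisFun_repr, Pi.basisFun_apply]
  change (Pi.single C (1 : ℂ) : ConjClasses G → ℂ) C.inv' * ξ.onClass C + _ = _
  by_cases hC : C.inv' = C
  · rcases hsq hC with h | h
    · norm_num [hC, h]
    · norm_num [hC, h]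
  · simp [hC]

/-- For a finite group `G` and a linear character `ξ` of `G`,
`#{real conjugacy classes of G} = #{χ irreducible : χ = χ̄⊗ξ} + 2·n_ξ`. -/
theorem count_real_classes_twisted (G : Type) [Group G] [Fintype G] (ξ : G →* ℂˣ) :
    Nat.card {C : ConjClasses G // ConjClasses.inv' C = C}
      = Nat.card {χ : G → ℂ // IsIrredChar G χ ∧
          ∀ g : G, χ g = (starRingEnd ℂ) (χ g) * (ξ g : ℂ)} + 2 * numXi G ξ := by
  have h := trace_twistOp_classes ξ
  rw [trace_twistOp_irr] at h
  have hcard : Nat.card {φ : IrrClassFun G // twistOp ξ φ.1 = φ.1} =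
      Nat.card {χ : G → ℂ // IsIrredChar G χ ∧
          ∀ g : G, χ g = (starRingEnd ℂ) (χ g) * (ξ g : ℂ)} := by
    refine Nat.card_congr (Equiv.ofBijective (fun φ => ⟨fun g => φ.1.1 (ConjClasses.mk g),
      φ.1.2, fun g => ?_⟩) ⟨fun φ ψ hφψ => ?_, fun χ => ?_⟩)
    · rw [starRingEnd_apply, ← φ.1.2.apply_inv g]
      exact (congrFun φ.2 (ConjClasses.mk g)).symm
    · exact Subtype.ext (Subtype.ext
        (ConjClasses.mk_surjective.injective_comp_right (congrArg Subtype.val hφψ)))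
    · obtain ⟨χ, hχ, hfix⟩ := χ
      refine ⟨⟨⟨Quotient.lift χ hχ.eq_of_isConj, hχ⟩, funext fun C => ?_⟩, rfl⟩
      obtain ⟨g, rfl⟩ := ConjClasses.mk_surjective C
      change χ g⁻¹ * (ξ g : ℂ) = χ g
      rw [hχ.apply_inv]
      exact (hfix g).symm
  rw [← hcard]
  exact_mod_cast h.symm
end

section
/- Let G be a finite group and n ≥ 1. For every linear character ξ of G and every linear character π of H_n, the map Θ_{ξ,π} : HG_n → ℂˣ, (f,σ) ↦ (∏_{i<n} ξ(f(2i)))·π(σ), is a group homomorphism, and the map (ξ,π) ↦ Θ_{ξ,π} is a bijection from (linear characters of G) × (linear characters of H_n) onto the set of all linear characters of HG_n. -/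
/-!
Writing `g : Fin n → G` for the values of `f` on the blocks `{2i, 2i+1}`, the group `HGₙ` is the
semidirect product of `Gⁿ` by `Hₙ`, where `Hₙ` permutes the factors through its action on blocks.

* `Θ_{ξ,π}` is multiplicative because an element of `Hₙ` only reindexes the product over the
  blocks (`prod_comp_symm`).
* Conversely, let `Θ` be a linear character of `HGₙ`. Its restriction `φ` to `Gⁿ` is the product of
  its restrictions to the factors. Every permutation of the blocks lifts to `Hₙ`
  (`liftPerm`) and acts by conjugation on `Gⁿ`; as `ℂˣ` is commutative, `φ` is invariant under it
  (`char_blockEmb_comp`), so its restrictions to the factors are all one character `ξ`.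
  With `π` the restriction of `Θ` to `Hₙ`, this gives `Θ = Θ_{ξ,π}`.
* Restricting `Θ_{ξ,π}` to the first factor `G` and to `Hₙ` recovers `ξ` and `π`, whence uniqueness.
-/

open scoped BigOperators


/-! ### The wreath product and its subgroup `HGₙ` -/

/-- The action of `Equiv.Perm α` on `α → G` given by `σ • f = f ∘ σ⁻¹`. -/
def permPiAut (α : Type) (G : Type) [Group G] : Equiv.Perm α →* MulAut (α → G) where
  toFun σ :=
    { toFun := fun f => f ∘ σ.symm
      invFun := fun f => f ∘ σ
      left_inv := fun f => funext fun i => by simp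
      right_inv := fun f => funext fun i => by simp
      map_mul' := fun f g => rfl }
  map_one' := rfl
  map_mul' := fun σ τ => rfl

/-- The wreath product `G ≀ S_m`, realized as `(Fin m → G) ⋊ Equiv.Perm (Fin m)`. -/
abbrev SGW (G : Type) [Group G] (m : ℕ) :=
  (Fin m → G) ⋊[permPiAut (Fin m) G] Equiv.Perm (Fin m)

/-- The function underlying the fixed-point-free involution `tₙ` on `Fin (2n)` swapping
`2i` and `2i+1` for each `i < n`. -/
def tfun (n : ℕ) (k : Fin (2 * n)) : Fin (2 * n) :=
  if h : k.val % 2 = 0 then ⟨k.val + 1, by have := k.isLt; omega⟩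
  else ⟨k.val - 1, by have := k.isLt; omega⟩

lemma tfun_involutive (n : ℕ) : Function.Involutive (tfun n) := by
  rintro ⟨k, hklt⟩
  simp only [tfun]
  split_ifs with h1 h2 h2 <;> rw [Fin.val_mk] at h2 <;> apply Fin.ext <;>
    simp only [Fin.val_mk] <;> omega

/-- The fixed-point-free involution `tₙ ∈ Equiv.Perm (Fin (2n))` swapping `2i` and `2i+1`
for each `0 ≤ i < n`. -/
def tperm (n : ℕ) : Equiv.Perm (Fin (2 * n)) :=
  Function.Involutive.toPerm (tfun n) (tfun_involutive n)

/-- The hyperoctahedral group `Hₙ`: the centralizer of `tₙ` in `Equiv.Perm (Fin (2n))`. -/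
def hyperoctahedral (n : ℕ) : Subgroup (Equiv.Perm (Fin (2 * n))) :=
  Subgroup.centralizer {tperm n}

lemma tperm_apply (n : ℕ) (k : Fin (2 * n)) : tperm n k = tfun n k := rfl

lemma paired_iff {G : Type} [Group G] {n : ℕ} (f : Fin (2 * n) → G) :
    (∀ i : Fin n, f ⟨2 * i.val, by have := i.isLt; omega⟩
        = f ⟨2 * i.val + 1, by have := i.isLt; omega⟩)
      ↔ ∀ k, f (tperm n k) = f k := by
  constructor
  · intro h k
    rw [tperm_apply]
    unfold tfun
    have hk := k.isLt
    split_ifs with h1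
    · have hi : k.val / 2 < n := by omega
      have h2 := h ⟨k.val / 2, hi⟩
      have e1 : (⟨2 * (k.val / 2), by omega⟩ : Fin (2 * n)) = k := Fin.ext (by simp; omega)
      have e2 : (⟨2 * (k.val / 2) + 1, by omega⟩ : Fin (2 * n))
          = (⟨k.val + 1, by omega⟩ : Fin (2 * n)) := Fin.ext (by simp; omega)
      rw [e1, e2] at h2
      exact h2.symm
    · have hi : k.val / 2 < n := by omega
      have h2 := h ⟨k.val / 2, hi⟩
      have e1 : (⟨2 * (k.val / 2), by omega⟩ : Fin (2 * n))
          = (⟨k.val - 1, by omega⟩ : Fin (2 * n)) := Fin.ext (by simp; omega)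
      have e2 : (⟨2 * (k.val / 2) + 1, by omega⟩ : Fin (2 * n)) = k := Fin.ext (by simp; omega)
      rw [e1, e2] at h2
      exact h2
  · intro h i
    have hi := i.isLt
    have h2 := h ⟨2 * i.val, by omega⟩
    rw [tperm_apply] at h2
    unfold tfun at h2
    rw [dif_pos (by simp)] at h2
    exact h2.symm

lemma centralizer_comm {n : ℕ} {σ : Equiv.Perm (Fin (2 * n))}
    (hσ : σ ∈ hyperoctahedral n) (k : Fin (2 * n)) :
    σ (tperm n k) = tperm n (σ k) := by
  have hc : tperm n * σ = σ * tperm n :=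
    Subgroup.mem_centralizer_iff.mp hσ (tperm n) rfl
  have h1 : (σ * tperm n) k = (tperm n * σ) k := by rw [hc]
  simpa [Equiv.Perm.mul_apply] using h1

lemma centralizer_comm_inv {n : ℕ} {σ : Equiv.Perm (Fin (2 * n))}
    (hσ : σ ∈ hyperoctahedral n) (k : Fin (2 * n)) :
    σ.symm (tperm n k) = tperm n (σ.symm k) := by
  have := centralizer_comm ((hyperoctahedral n).inv_mem hσ) k
  simpa using this

/-- The subgroup `HGₙ ≤ SG_{2n}` consisting of pairs `(f, σ)` with `σ ∈ Hₙ` and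
`f(2i) = f(2i+1)` for all `0 ≤ i < n`. -/
def HGn (G : Type) [Group G] (n : ℕ) : Subgroup (SGW G (2 * n)) where
  carrier := {x | x.right ∈ hyperoctahedral n ∧
    ∀ i : Fin n, x.left ⟨2 * i.val, by have := i.isLt; omega⟩
      = x.left ⟨2 * i.val + 1, by have := i.isLt; omega⟩}
  one_mem' := ⟨Subgroup.one_mem _, fun i => rfl⟩
  mul_mem' := by
    rintro a b ⟨ha1, ha2⟩ ⟨hb1, hb2⟩
    refine ⟨Subgroup.mul_mem _ ha1 hb1, ?_⟩
    rw [paired_iff] at ha2 hb2 ⊢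
    intro k
    rw [SemidirectProduct.mul_left]
    show a.left (tperm n k) * b.left (a.right.symm (tperm n k))
      = a.left k * b.left (a.right.symm k)
    rw [ha2 k, centralizer_comm_inv ha1 k, hb2 (a.right.symm k)]
  inv_mem' := by
    rintro a ⟨ha1, ha2⟩
    refine ⟨Subgroup.inv_mem _ ha1, ?_⟩
    rw [paired_iff] at ha2 ⊢
    intro k
    rw [SemidirectProduct.inv_left]
    show (a.left (a.right (tperm n k)))⁻¹ = (a.left (a.right k))⁻¹
    rw [centralizer_comm ha1 k, ha2 (a.right k)]

/-- The linear character `Θ_{ξ,π}` of `HGₙ`, as a function: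
`Θ_{ξ,π}(f,σ) = (∏_{i<n} ξ(f(2i))) · π(σ)`. -/
noncomputable def ThetaFun (G : Type) [Group G] (n : ℕ) (ξ : G →* ℂˣ)
    (π : ↥(hyperoctahedral n) →* ℂˣ) (x : ↥(HGn G n)) : ℂˣ :=
  (∏ i : Fin n, ξ (x.val.left ⟨2 * i.val, by have := i.isLt; omega⟩)) *
    π ⟨x.val.right, x.2.1⟩

/-! ### Blocks and the multiplicativity of `Θ_{ξ,π}` -/

/-- The point `2i`, used as the representative of the block `{2i, 2i+1}`. -/
def evenPt {n : ℕ} (i : Fin n) : Fin (2 * n) := ⟨2 * i.val, by have := i.isLt; omega⟩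

/-- The index of the block `{2i, 2i+1}` containing a point. -/
def blk {n : ℕ} (k : Fin (2 * n)) : Fin n := ⟨k.val / 2, by have := k.isLt; omega⟩

lemma blk_evenPt {n : ℕ} (i : Fin n) : blk (evenPt i) = i := by
  ext; simp [blk, evenPt]

lemma blk_tperm {n : ℕ} (k : Fin (2 * n)) : blk (tperm n k) = blk k := by
  rw [tperm_apply]
  unfold tfun
  ext
  split_ifs with h <;> simp only [blk] <;> omega

lemma eq_evenPt_or {n : ℕ} (k : Fin (2 * n)) :
    k = evenPt (blk k) ∨ k = tperm n (evenPt (blk k)) := by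
  rcases Nat.mod_two_eq_zero_or_one k.val with h | h
  · left; ext; simp only [blk, evenPt]; omega
  · right
    rw [tperm_apply]
    unfold tfun
    rw [dif_pos (by simp [evenPt])]
    ext; simp only [blk, evenPt]; omega

/-- A function that is constant on blocks is determined by its values at the even points. -/
lemma paired_apply {G : Type} {n : ℕ} {f : Fin (2 * n) → G}
    (hf : ∀ k, f (tperm n k) = f k) (k : Fin (2 * n)) : f k = f (evenPt (blk k)) := by
  rcases eq_evenPt_or k with h | h
  · exact congrArg f h
  · exact (congrArg f h).trans (hf _)

lemma HGn_paired {G : Type} [Group G] {n : ℕ} (x : ↥(HGn G n)) (k : Fin (2 * n)) :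
    x.val.left (tperm n k) = x.val.left k :=
  (paired_iff _).mp x.2.2 k

/-- Elements of the hyperoctahedral group map blocks to blocks. -/
lemma blk_apply {n : ℕ} {σ : Equiv.Perm (Fin (2 * n))} (hσ : σ ∈ hyperoctahedral n)
    (k : Fin (2 * n)) : blk (σ (evenPt (blk k))) = blk (σ k) :=
  (paired_apply (f := fun k => blk (σ k))
    (fun k => by rw [centralizer_comm hσ, blk_tperm]) k).symm

/-- The permutation of the set of blocks induced by an element of the hyperoctahedral group. -/
def blockPerm {n : ℕ} (σ : Equiv.Perm (Fin (2 * n))) (hσ : σ ∈ hyperoctahedral n) :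
    Equiv.Perm (Fin n) where
  toFun i := blk (σ (evenPt i))
  invFun i := blk (σ.symm (evenPt i))
  left_inv i := by
    have h := blk_apply ((hyperoctahedral n).inv_mem hσ) (σ (evenPt i))
    rw [Equiv.Perm.inv_def, Equiv.symm_apply_apply, blk_evenPt] at h
    exact h
  right_inv i := by
    have h := blk_apply hσ (σ.symm (evenPt i))
    rw [Equiv.apply_symm_apply, blk_evenPt] at h
    exact h

/-- The product over the blocks of a function constant on blocks does not change when the function
is moved by an element of the hyperoctahedral group. -/
lemma prod_comp_symm {n : ℕ} {F : Fin (2 * n) → ℂˣ} (hF : ∀ k, F (tperm n k) = F k)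
    {σ : Equiv.Perm (Fin (2 * n))} (hσ : σ ∈ hyperoctahedral n) :
    ∏ i : Fin n, F (σ.symm (evenPt i)) = ∏ i : Fin n, F (evenPt i) := by
  rw [← Equiv.prod_comp (blockPerm σ hσ).symm (fun i => F (evenPt i))]
  exact Finset.prod_congr rfl fun i _ => paired_apply hF _

lemma ThetaFun_mul {G : Type} [Group G] {n : ℕ} (ξ : G →* ℂˣ)
    (π : ↥(hyperoctahedral n) →* ℂˣ) (x y : ↥(HGn G n)) :
    ThetaFun G n ξ π (x * y) = ThetaFun G n ξ π x * ThetaFun G n ξ π y := by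
  have h := prod_comp_symm (F := fun k => ξ (y.val.left k))
    (fun k => by simp only [HGn_paired]) x.2.1
  have hπ : π ⟨(x * y).val.right, (x * y).2.1⟩
      = π ⟨x.val.right, x.2.1⟩ * π ⟨y.val.right, y.2.1⟩ := by
    rw [← map_mul]; rfl
  have hξ : ∏ i : Fin n, ξ ((x * y).val.left (evenPt i))
      = (∏ i : Fin n, ξ (x.val.left (evenPt i))) * ∏ i : Fin n, ξ (y.val.left (evenPt i)) := by
    rw [← h, ← Finset.prod_mul_distrib]
    exact Finset.prod_congr rfl fun i _ => ξ.map_mul _ _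
  change (∏ i : Fin n, ξ ((x * y).val.left (evenPt i))) * _
    = ((∏ i : Fin n, ξ (x.val.left (evenPt i))) * _)
      * ((∏ i : Fin n, ξ (y.val.left (evenPt i))) * _)
  rw [hξ, hπ, mul_mul_mul_comm]

/-! ### The decomposition of `HGₙ` into `Gⁿ` and `Hₙ` -/

/-- The inclusion of `Gⁿ` in `HGₙ`: `g` is sent to `(f, 1)` with `f(2i) = f(2i+1) = g(i)`. -/
def blockEmb (G : Type) [Group G] (n : ℕ) : (Fin n → G) →* ↥(HGn G n) where
  toFun g := ⟨⟨g ∘ blk, 1⟩, Subgroup.one_mem _,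
    (paired_iff _).mpr fun k => congrArg g (blk_tperm k)⟩
  map_one' := rfl
  map_mul' _ _ := rfl

/-- The inclusion `σ ↦ (1, σ)` of `Hₙ` in `HGₙ`. -/
def permEmb (G : Type) [Group G] (n : ℕ) : ↥(hyperoctahedral n) →* ↥(HGn G n) where
  toFun σ := ⟨⟨1, σ.val⟩, σ.2, fun _ => rfl⟩
  map_one' := rfl
  map_mul' σ τ := by
    apply Subtype.ext
    apply SemidirectProduct.ext
    · exact (mul_one (1 : Fin (2 * n) → G)).symm
    · rfl

lemma eq_blockEmb_mul_permEmb {G : Type} [Group G] {n : ℕ} (x : ↥(HGn G n)) :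
    x = blockEmb G n (fun i => x.val.left (evenPt i)) * permEmb G n ⟨x.val.right, x.2.1⟩ := by
  apply Subtype.ext
  apply SemidirectProduct.ext
  · funext k
    exact (paired_apply (HGn_paired x) k).trans (mul_one _).symm
  · exact (one_mul _).symm

/-- The lift to `Fin (2n)` of a permutation of the blocks, preserving parity. -/
def liftPerm {n : ℕ} (τ : Equiv.Perm (Fin n)) : Equiv.Perm (Fin (2 * n)) where
  toFun k := ⟨2 * (τ (blk k)).val + k.val % 2, by have := (τ (blk k)).isLt; omega⟩
  invFun k := ⟨2 * (τ.symm (blk k)).val + k.val % 2, by have := (τ.symm (blk k)).isLt; omega⟩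
  left_inv k := by
    have h : ∀ h', blk (⟨2 * (τ (blk k)).val + k.val % 2, h'⟩ : Fin (2 * n)) = τ (blk k) := by
      intro h'; ext; simp only [blk]; omega
    ext
    simp only [h, Equiv.symm_apply_apply]
    simp only [blk]; omega
  right_inv k := by
    have h : ∀ h', blk (⟨2 * (τ.symm (blk k)).val + k.val % 2, h'⟩ : Fin (2 * n))
        = τ.symm (blk k) := by
      intro h'; ext; simp only [blk]; omega
    ext
    simp only [h, Equiv.apply_symm_apply]
    simp only [blk]; omega

lemma blk_liftPerm_symm {n : ℕ} (τ : Equiv.Perm (Fin n)) (k : Fin (2 * n)) :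
    blk ((liftPerm τ).symm k) = τ.symm (blk k) := by
  ext
  change (2 * (τ.symm (blk k)).val + k.val % 2) / 2 = _
  omega

lemma liftPerm_mem {n : ℕ} (τ : Equiv.Perm (Fin n)) : liftPerm τ ∈ hyperoctahedral n := by
  rw [hyperoctahedral, Subgroup.mem_centralizer_singleton_iff]
  ext k
  change (liftPerm τ (tperm n k)).val = (tperm n (liftPerm τ k)).val
  have h1 : (liftPerm τ (tperm n k)).val = 2 * (τ (blk k)).val + (tperm n k).val % 2 := by
    rw [← blk_tperm k]; rfl
  have h2 : (liftPerm τ k).val = 2 * (τ (blk k)).val + k.val % 2 := rfl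
  rw [h1, tperm_apply, tperm_apply]
  unfold tfun
  split_ifs <;> simp only <;> omega

/-- Conjugation by a lifted block permutation permutes the coordinates of `Gⁿ`. -/
lemma permEmb_mul_blockEmb {G : Type} [Group G] {n : ℕ} (τ : Equiv.Perm (Fin n))
    (g : Fin n → G) :
    permEmb G n ⟨liftPerm τ, liftPerm_mem τ⟩ * blockEmb G n g
      = blockEmb G n (g ∘ τ.symm) * permEmb G n ⟨liftPerm τ, liftPerm_mem τ⟩ := by
  apply Subtype.ext
  apply SemidirectProduct.ext
  · funext k
    change 1 * g (blk ((liftPerm τ).symm k)) = g (τ.symm (blk k)) * 1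
    rw [blk_liftPerm_symm, one_mul, mul_one]
  · exact (mul_one _).trans (one_mul _).symm

/-! ### Restrictions of linear characters to `Gⁿ` and `Hₙ` -/

lemma char_blockEmb_comp {G : Type} [Group G] {n : ℕ} (Θ : ↥(HGn G n) →* ℂˣ)
    (τ : Equiv.Perm (Fin n)) (g : Fin n → G) :
    Θ (blockEmb G n (g ∘ τ.symm)) = Θ (blockEmb G n g) := by
  have h := congrArg Θ (permEmb_mul_blockEmb τ g)
  rw [map_mul, map_mul, mul_comm] at h
  exact (mul_right_cancel h).symm

/-- All the factors of `Gⁿ` carry the same character, the one of the factor `i₀`. -/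
lemma char_mulSingle {G : Type} [Group G] {n : ℕ} (Θ : ↥(HGn G n) →* ℂˣ)
    (i₀ i : Fin n) (a : G) :
    Θ (blockEmb G n (Pi.mulSingle i a)) = Θ (blockEmb G n (Pi.mulSingle i₀ a)) := by
  rw [← char_blockEmb_comp Θ (Equiv.swap i i₀) (Pi.mulSingle i a)]
  congr 2
  funext j
  simp only [Function.comp_apply, Equiv.symm_swap, Pi.mulSingle_apply]
  congr 1
  rw [Equiv.swap_apply_eq_iff, Equiv.swap_apply_left]

/-- The restriction of a linear character to `Gⁿ` is the product over all factors of its restriction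
to the factor `i₀`. -/
lemma char_blockEmb {G : Type} [Group G] {n : ℕ} (Θ : ↥(HGn G n) →* ℂˣ)
    (i₀ : Fin n) (g : Fin n → G) :
    Θ (blockEmb G n g) = ∏ i : Fin n, Θ (blockEmb G n (Pi.mulSingle i₀ (g i))) := by
  let ξ : G →* ℂˣ := (Θ.comp (blockEmb G n)).comp (MonoidHom.mulSingle (fun _ => G) i₀)
  have h : Θ.comp (blockEmb G n) = ∏ i : Fin n, ξ.comp (Pi.evalMonoidHom (fun _ => G) i) := by
    apply MonoidHom.pi_ext
    intro i a
    rw [MonoidHom.finsetProd_apply, Finset.prod_eq_single i]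
    · simpa [ξ] using char_mulSingle Θ i₀ i a
    · intro j _ hj
      simp [Pi.mulSingle_eq_of_ne hj]
    · simp
  have h' := DFunLike.congr_fun h g
  rw [MonoidHom.finsetProd_apply] at h'
  exact h'

lemma ThetaFun_blockEmb {G : Type} [Group G] {n : ℕ} (ξ : G →* ℂˣ)
    (π : ↥(hyperoctahedral n) →* ℂˣ) (i₀ : Fin n) (a : G) :
    ThetaFun G n ξ π (blockEmb G n (Pi.mulSingle i₀ a)) = ξ a := by
  change (∏ i : Fin n, ξ ((Pi.mulSingle i₀ a : Fin n → G) (blk (evenPt i)))) * π 1 = ξ a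
  simp only [blk_evenPt]
  rw [map_one, mul_one, Finset.prod_eq_single i₀]
  · simp
  · intro j _ hj
    simp [Pi.mulSingle_eq_of_ne hj]
  · simp

lemma ThetaFun_permEmb {G : Type} [Group G] {n : ℕ} (ξ : G →* ℂˣ)
    (π : ↥(hyperoctahedral n) →* ℂˣ) (σ : ↥(hyperoctahedral n)) :
    ThetaFun G n ξ π (permEmb G n σ) = π σ := by
  change (∏ i : Fin n, ξ 1) * π σ = π σ
  simp

/-- For a finite group `G` and `n ≥ 1`: for every linear character `ξ` of `G`
and every linear character `π` of `Hₙ`, the map `Θ_{ξ,π} : HGₙ → ℂˣ`,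
`(f,σ) ↦ (∏_{i<n} ξ(f(2i)))·π(σ)`, is a group homomorphism; moreover `(ξ,π) ↦ Θ_{ξ,π}` is a
bijection from pairs of linear characters onto the set of all linear characters of `HGₙ`. -/
theorem linear_characters_of_HGn (G : Type) [Group G] [Fintype G] (n : ℕ) (hn : 1 ≤ n) :
    (∀ (ξ : G →* ℂˣ) (π : ↥(hyperoctahedral n) →* ℂˣ) (x y : ↥(HGn G n)),
      ThetaFun G n ξ π (x * y) = ThetaFun G n ξ π x * ThetaFun G n ξ π y) ∧
    (∀ Θ : ↥(HGn G n) →* ℂˣ,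
      ∃! p : (G →* ℂˣ) × (↥(hyperoctahedral n) →* ℂˣ),
        ∀ x : ↥(HGn G n), ThetaFun G n p.1 p.2 x = Θ x) := by
  refine ⟨fun ξ π x y => ThetaFun_mul ξ π x y, fun Θ => ?_⟩
  let i₀ : Fin n := ⟨0, hn⟩
  refine ⟨((Θ.comp (blockEmb G n)).comp (MonoidHom.mulSingle (fun _ => G) i₀),
    Θ.comp (permEmb G n)), fun x => ?_, ?_⟩
  · conv_rhs => rw [eq_blockEmb_mul_permEmb x, map_mul, char_blockEmb Θ i₀]
    rfl
  · rintro ⟨ξ, π⟩ h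
    refine Prod.ext (MonoidHom.ext fun a => ?_) (MonoidHom.ext fun σ => ?_)
    · exact (ThetaFun_blockEmb ξ π i₀ a).symm.trans (h _)
    · exact (ThetaFun_permEmb ξ π σ).symm.trans (h _)
end
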